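/- arXiv:2410.10307 — 7 statements merged into one kernel-verified Lean document; each statement's English description precedes it below -/
import Mathlib

section
/- Let λ ∈ ℝ and let φ be a Dirichlet eigenfunction of 𝔏 for λ with ∫_0^π φ² dx = 1. Let p : [0,π] → ℝ be continuously differentiable and q : [0,π] → ℝ continuous, and set I := ∫_0^π (q − (1/2)p') φ² dx. Then there exists a twice continuously differentiable function ψ : [0,π] → ℝ with 𝔏ψ − λψ = (pφ)' − qφ + Iφ on [0,π] and ψ(0) = ψ(π) = 0. -/
/-- The Sturm–Liouville operator `𝔏 u = -(γ u')' + γ₀ u`. -/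
noncomputable def SL (γ γ₀ u : ℝ → ℝ) : ℝ → ℝ :=
  fun x => -(deriv (fun y => γ y * deriv u y) x) + γ₀ x * u x

/-- A Dirichlet eigenfunction of `𝔏` for the eigenvalue `lam`:
a nonzero C² function `φ` with `𝔏 φ = lam φ` on `[0, π]` and `φ 0 = φ π = 0`. -/
def IsDirichletEF (γ γ₀ : ℝ → ℝ) (lam : ℝ) (φ : ℝ → ℝ) : Prop :=
  ContDiff ℝ 2 φ ∧ (∃ x ∈ Set.Icc (0:ℝ) Real.pi, φ x ≠ 0) ∧
  (∀ x ∈ Set.Icc (0:ℝ) Real.pi, SL γ γ₀ φ x = lam * φ x) ∧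
  φ 0 = 0 ∧ φ Real.pi = 0

open Set MeasureTheory intervalIntegral

/-- Truncation to `[-R, R]`. -/
noncomputable def slClamp (R y : ℝ) : ℝ := max (-R) (min R y)

lemma slClamp_abs_le {R : ℝ} (hR : 0 ≤ R) (y : ℝ) : |slClamp R y| ≤ |y| := by
  unfold slClamp
  grind

lemma slClamp_abs_le' {R : ℝ} (hR : 0 ≤ R) (y : ℝ) : |slClamp R y| ≤ R := by
  unfold slClamp
  grind

lemma slClamp_sub {R : ℝ} (hR : 0 ≤ R) (y z : ℝ) : |slClamp R y - slClamp R z| ≤ |y - z| := by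
  unfold slClamp
  grind

lemma slClamp_eq {R : ℝ} (y : ℝ) (hy : |y| ≤ R) : slClamp R y = y := by
  unfold slClamp
  grind

lemma sl_bound {T : ℝ} {A : ℝ → ℝ} (hA : Continuous A) :
    ∃ M : ℝ, ∀ t ∈ Icc (0:ℝ) T, |A t| ≤ M := by
  obtain ⟨M, hM⟩ := isCompact_Icc.exists_bound_of_continuousOn (hA.continuousOn (s := Icc 0 T))
  exact ⟨M, hM⟩

lemma sl_norm_bound {M a b g x y u : ℝ} (ha : |a| ≤ M) (hb : |b| ≤ M) (hg : |g| ≤ M)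
    (hM : 1 ≤ M) (hx : |x| ≤ u) (hy : |y| ≤ u) :
    ‖((y, a * y + b * x + g) : ℝ × ℝ)‖ ≤ 2 * M * u + M := by
  have hu : 0 ≤ u := (abs_nonneg _).trans hx
  have h1 : |a * y| ≤ M * u := by
    rw [abs_mul]; gcongr
  have h2 : |b * x| ≤ M * u := by
    rw [abs_mul]; gcongr
  rw [Prod.norm_def]
  refine max_le ?_ ?_
  · simp only [Real.norm_eq_abs]
    nlinarith
  · simp only [Real.norm_eq_abs]
    have := abs_add_three (a * y) (b * x) g
    linarith

lemma sl_norm_bound' {M a b x y u : ℝ} (ha : |a| ≤ M) (hb : |b| ≤ M)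
    (hM : 1 ≤ M) (hx : |x| ≤ u) (hy : |y| ≤ u) :
    ‖((y, a * y + b * x) : ℝ × ℝ)‖ ≤ 2 * M * u := by
  have hu : 0 ≤ u := (abs_nonneg _).trans hx
  have h1 : |a * y| ≤ M * u := by
    rw [abs_mul]; gcongr
  have h2 : |b * x| ≤ M * u := by
    rw [abs_mul]; gcongr
  rw [Prod.norm_def]
  refine max_le ?_ ?_
  · simp only [Real.norm_eq_abs]
    nlinarith
  · simp only [Real.norm_eq_abs]
    have := abs_add_le (a * y) (b * x)
    linarith

lemma sl_exists_system {T : ℝ} (hT : 0 ≤ T) {A B G : ℝ → ℝ} (hA : Continuous A)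
    (hB : Continuous B) (hG : Continuous G) :
    ∃ α : ℝ → ℝ × ℝ, α 0 = 0 ∧ ∀ t ∈ Icc (0:ℝ) T,
      HasDerivWithinAt α ((α t).2, A t * (α t).2 + B t * (α t).1 + G t) (Icc 0 T) t := by
  obtain ⟨MA, hMA⟩ := sl_bound (T := T) hA
  obtain ⟨MB, hMB⟩ := sl_bound (T := T) hB
  obtain ⟨MG, hMG⟩ := sl_bound (T := T) hG
  obtain ⟨M, hM1, hMA, hMB, hMG⟩ : ∃ M : ℝ, 1 ≤ M ∧ (∀ t ∈ Icc (0:ℝ) T, |A t| ≤ M) ∧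
      (∀ t ∈ Icc (0:ℝ) T, |B t| ≤ M) ∧ (∀ t ∈ Icc (0:ℝ) T, |G t| ≤ M) := by
    refine ⟨max 1 (max MA (max MB MG)), le_max_left _ _, fun t ht => ?_, fun t ht => ?_,
      fun t ht => ?_⟩
    · exact (hMA t ht).trans (by simp)
    · exact (hMB t ht).trans (by simp)
    · exact (hMG t ht).trans (by simp)
  set R : ℝ := gronwallBound 0 (2 * M) M T with hRdef
  have hmono := gronwallBound_mono (δ := 0) (K := 2 * M) (ε := M) le_rfl (by linarith) (by linarith)
  have hR : 0 ≤ R := by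
    have := hmono hT
    rwa [gronwallBound_x0] at this
  let F : ℝ → ℝ × ℝ → ℝ × ℝ := fun t x =>
    (slClamp R x.2, A t * slClamp R x.2 + B t * slClamp R x.1 + G t)
  have hc1 : ∀ x : ℝ × ℝ, |x.1| ≤ ‖x‖ := fun x => norm_fst_le x
  have hc2 : ∀ x : ℝ × ℝ, |x.2| ≤ ‖x‖ := fun x => norm_snd_le x
  have hL0 : 0 ≤ 2 * M * R + M := by positivity
  have hPL : IsPicardLindelof F (tmin := 0) (tmax := T) ⟨0, left_mem_Icc.2 hT⟩ (0 : ℝ × ℝ)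
      (Real.toNNReal ((2 * M * R + M) * T)) 0 (Real.toNNReal (2 * M * R + M))
      (Real.toNNReal (2 * M)) := by
    refine ⟨fun t ht => ?_, fun x _ => ?_, fun t ht x _ => ?_, ?_⟩
    · refine LipschitzOnWith.of_dist_le_mul fun x _ y _ => ?_
      rw [Real.coe_toNNReal _ (by linarith), dist_eq_norm, dist_eq_norm]
      have h1 := (slClamp_sub hR x.1 y.1).trans (hc1 (x - y))
      have h2 := (slClamp_sub hR x.2 y.2).trans (hc2 (x - y))
      have := sl_norm_bound' (hMA t ht) (hMB t ht) hM1 h1 h2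
      have e : F t x - F t y = (slClamp R x.2 - slClamp R y.2,
          A t * (slClamp R x.2 - slClamp R y.2) + B t * (slClamp R x.1 - slClamp R y.1)) := by
        ext
        · rfl
        · simp only [F, Prod.snd_sub]
          ring
      rw [e]
      exact this
    · apply Continuous.continuousOn
      simp only [F]
      fun_prop
    · rw [Real.coe_toNNReal _ hL0]
      exact sl_norm_bound (hMA t ht) (hMB t ht) (hMG t ht) hM1 (slClamp_abs_le' hR _)
        (slClamp_abs_le' hR _)
    · rw [Real.coe_toNNReal _ hL0, Real.coe_toNNReal _ (by positivity)]
      simp [hT]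
  obtain ⟨α, hα0, hα⟩ := hPL.exists_eq_forall_mem_Icc_hasDerivWithinAt₀
  have hα0 : α 0 = 0 := hα0
  have hcont : ContinuousOn α (Icc 0 T) := fun t ht => (hα t ht).continuousWithinAt
  have hbd : ∀ t ∈ Icc (0:ℝ) T, ‖α t‖ ≤ R := by
    intro t ht
    have := norm_le_gronwallBound_of_norm_deriv_right_le (f := α) (f' := fun t => F t (α t))
      (δ := 0) (K := 2 * M) (ε := M) hcont
      (fun x hx => (hα x ⟨hx.1, hx.2.le⟩).mono_of_mem_nhdsWithin
        (Icc_mem_nhdsGE_of_mem hx)) (by simp [hα0])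
      (fun x hx => sl_norm_bound (hMA x ⟨hx.1, hx.2.le⟩) (hMB x ⟨hx.1, hx.2.le⟩)
        (hMG x ⟨hx.1, hx.2.le⟩) hM1 ((slClamp_abs_le hR _).trans (hc1 _))
        ((slClamp_abs_le hR _).trans (hc2 _))) t ht
    refine this.trans (hmono ?_)
    simpa using ht.2
  refine ⟨α, hα0, fun t ht => ?_⟩
  have := hα t ht
  simp only [F] at this
  rwa [slClamp_eq _ ((hc1 _).trans (hbd t ht)), slClamp_eq _ ((hc2 _).trans (hbd t ht))] at this

lemma sl_contDiff_two {f : ℝ → ℝ} (h1 : Differentiable ℝ f) (h2 : Differentiable ℝ (deriv f))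
    (h3 : Continuous (deriv (deriv f))) : ContDiff ℝ 2 f := by
  rw [show (2 : WithTop ℕ∞) = 1 + 1 from (by norm_num), contDiff_succ_iff_deriv]
  exact ⟨h1, by simp, contDiff_one_iff_deriv.2 ⟨h2, h3⟩⟩

lemma sl_exists {T : ℝ} (hT : 0 ≤ T) {A B G : ℝ → ℝ} (hA : Continuous A)
    (hB : Continuous B) (hG : Continuous G) :
    ∃ ψ : ℝ → ℝ, ContDiff ℝ 2 ψ ∧ ψ 0 = 0 ∧ deriv ψ 0 = 0 ∧ ∀ t ∈ Icc (0:ℝ) T,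
      deriv (deriv ψ) t = A t * deriv ψ t + B t * ψ t + G t := by
  obtain ⟨α, hα0, hα⟩ := sl_exists_system hT hA hB hG
  have hcont : ContinuousOn α (Icc 0 T) := fun t ht => (hα t ht).continuousWithinAt
  have hβ : Continuous (IccExtend hT ((Icc 0 T).domRestrict α)) :=
    (continuousOn_iff_continuous_domRestrict.1 hcont).Icc_extend'
  set β := IccExtend hT ((Icc 0 T).domRestrict α) with hβdef
  have hβα : ∀ t ∈ Icc (0:ℝ) T, β t = α t := fun t ht => by
    rw [hβdef, IccExtend_of_mem _ _ ht]; rfl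
  let H : ℝ → ℝ := fun t => A t * (β t).2 + B t * (β t).1 + G t
  have hH : Continuous H := by simp only [H]; fun_prop
  let V : ℝ → ℝ := fun t => ∫ x in (0:ℝ)..t, H x
  have hV : ∀ t, HasDerivAt V (H t) t := fun t => (hH.integral_hasStrictDerivAt 0 t).hasDerivAt
  have hVc : Continuous V := continuous_iff_continuousAt.2 fun t => (hV t).continuousAt
  let ψ : ℝ → ℝ := fun t => ∫ x in (0:ℝ)..t, V x
  have hψ : ∀ t, HasDerivAt ψ (V t) t := fun t => (hVc.integral_hasStrictDerivAt 0 t).hasDerivAt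
  have dψ : deriv ψ = V := funext fun t => (hψ t).deriv
  have dV : deriv V = H := funext fun t => (hV t).deriv
  have hd : ∀ t ∈ Icc (0:ℝ) T, ∀ x ∈ Ioo 0 t,
      HasDerivAt α ((α x).2, A x * (α x).2 + B x * (α x).1 + G x) x := fun t ht x hx =>
    (hα x ⟨hx.1.le, hx.2.le.trans ht.2⟩).hasDerivAt
      (Icc_mem_nhds hx.1 (hx.2.trans_le ht.2))
  have hV2 : ∀ t ∈ Icc (0:ℝ) T, V t = (α t).2 := by
    intro t ht
    have hsub : Icc 0 t ⊆ Icc 0 T := Icc_subset_Icc_right ht.2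
    have := integral_eq_sub_of_hasDerivAt_of_le (f := fun x => (α x).2) (f' := H) ht.1
      (continuous_snd.comp_continuousOn (hcont.mono hsub))
      (fun x hx => by
        have h := (hd t ht x hx).hasFDerivAt.snd.hasDerivAt
        simp only [H]
        rw [hβα x (hsub ⟨hx.1.le, hx.2.le⟩)]
        simpa using h) (hH.intervalIntegrable _ _)
    simpa [hα0] using this
  have hψ1 : ∀ t ∈ Icc (0:ℝ) T, ψ t = (α t).1 := by
    intro t ht
    have hsub : Icc 0 t ⊆ Icc 0 T := Icc_subset_Icc_right ht.2
    have := integral_eq_sub_of_hasDerivAt_of_le (f := fun x => (α x).1) (f' := V) ht.1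
      (continuous_fst.comp_continuousOn (hcont.mono hsub))
      (fun x hx => by
        have h := (hd t ht x hx).hasFDerivAt.fst.hasDerivAt
        rw [hV2 x (hsub ⟨hx.1.le, hx.2.le⟩)]
        simpa using h) (hVc.intervalIntegrable _ _)
    simpa [hα0] using this
  refine ⟨ψ, sl_contDiff_two (fun t => (hψ t).differentiableAt) ?_ ?_, ?_, ?_, ?_⟩
  · rw [dψ]; exact fun t => (hV t).differentiableAt
  · rw [dψ, dV]; exact hH
  · simp [ψ]
  · rw [dψ]; simp [V]
  · intro t ht
    rw [dψ, dV, hV2 t ht, hψ1 t ht]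
    simp only [H]
    rw [hβα t ht]

lemma sl_unique {T : ℝ} {A B : ℝ → ℝ} (hA : Continuous A)
    (hB : Continuous B) {φ : ℝ → ℝ} (h1 : Differentiable ℝ φ) (h2 : Differentiable ℝ (deriv φ))
    (hode : ∀ t ∈ Icc (0:ℝ) T, deriv (deriv φ) t = A t * deriv φ t + B t * φ t)
    (h0 : φ T = 0) (h0' : deriv φ T = 0) : ∀ t ∈ Icc (0:ℝ) T, φ t = 0 := by
  obtain ⟨MA, hMA⟩ := sl_bound (T := T) hA
  obtain ⟨MB, hMB⟩ := sl_bound (T := T) hB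
  obtain ⟨M, hM1, hMA, hMB⟩ : ∃ M : ℝ, 1 ≤ M ∧ (∀ t ∈ Icc (0:ℝ) T, |A t| ≤ M) ∧
      (∀ t ∈ Icc (0:ℝ) T, |B t| ≤ M) := by
    refine ⟨max 1 (max MA MB), le_max_left _ _, fun t ht => ?_, fun t ht => ?_⟩
    · exact (hMA t ht).trans (by simp)
    · exact (hMB t ht).trans (by simp)
  let f : ℝ → ℝ × ℝ := fun t => (φ (T - t), deriv φ (T - t))
  let f' : ℝ → ℝ × ℝ := fun t => -(deriv φ (T - t), deriv (deriv φ) (T - t))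
  have hf : ∀ t, HasDerivAt f (f' t) t := by
    intro t
    have e : HasDerivAt (fun t : ℝ => T - t) (-1) t := by
      simpa using (hasDerivAt_id t).const_sub T
    have a1 := (h1 (T - t)).hasDerivAt.comp t e
    have a2 := (h2 (T - t)).hasDerivAt.comp t e
    have := a1.prodMk a2
    simpa [f, f'] using this
  have hz := eq_zero_of_abs_deriv_le_mul_abs_self_of_eq_zero_right (f := f) (f' := f')
    (K := 2 * M) (a := 0) (b := T)
    (fun t _ => (hf t).continuousAt.continuousWithinAt) (fun t _ => (hf t).hasDerivWithinAt)
    (by simp [f, h0, h0'])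
    (fun t ht => by
      have ht' : T - t ∈ Icc 0 T := ⟨by linarith [ht.2], by linarith [ht.1]⟩
      simp only [f', norm_neg]
      rw [hode _ ht']
      exact sl_norm_bound' (hMA _ ht') (hMB _ ht') hM1 (norm_fst_le (f t)) (norm_snd_le (f t)))
  intro t ht
  have := hz (T - t) ⟨by linarith [ht.2], by linarith [ht.1]⟩
  have := congrArg Prod.fst this
  simpa [f] using this

lemma sl_extend {T : ℝ} (hT : 0 ≤ T) {f : ℝ → ℝ} (hf : ContinuousOn f (Icc 0 T)) :
    ∃ g : ℝ → ℝ, Continuous g ∧ ∀ t ∈ Icc (0:ℝ) T, g t = f t :=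
  ⟨IccExtend hT ((Icc 0 T).domRestrict f), (continuousOn_iff_continuous_domRestrict.1 hf).Icc_extend',
    fun t ht => by rw [IccExtend_of_mem _ _ ht]; rfl⟩

theorem stmt2 (γ γ₀ : ℝ → ℝ)
    (hγ : ContDiff ℝ 1 γ) (hγpos : ∀ x ∈ Set.Icc (0:ℝ) Real.pi, 0 < γ x)
    (hγ₀ : ContinuousOn γ₀ (Set.Icc 0 Real.pi))
    (lam : ℝ) (φ : ℝ → ℝ) (hφ : IsDirichletEF γ γ₀ lam φ)
    (hnorm : ∫ x in (0:ℝ)..Real.pi, (φ x) ^ 2 = 1)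
    (p q : ℝ → ℝ) (hp : ContDiff ℝ 1 p) (hq : ContinuousOn q (Set.Icc 0 Real.pi))
    (I : ℝ) (hI : I = ∫ x in (0:ℝ)..Real.pi, (q x - (1/2) * deriv p x) * (φ x) ^ 2) :
    ∃ ψ : ℝ → ℝ, ContDiff ℝ 2 ψ ∧
      (∀ x ∈ Set.Icc (0:ℝ) Real.pi,
        SL γ γ₀ ψ x - lam * ψ x = deriv (fun y => p y * φ y) x - q x * φ x + I * φ x) ∧
      ψ 0 = 0 ∧ ψ Real.pi = 0 := by
  obtain ⟨hφ2, ⟨x₀, hx₀, hφx₀⟩, hode, hφ0, hφπ⟩ := hφ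
  have hpi : (0:ℝ) ≤ Real.pi := Real.pi_pos.le
  have dγ : Differentiable ℝ γ := hγ.differentiable one_ne_zero
  have dp : Differentiable ℝ p := hp.differentiable one_ne_zero
  have cγ' : Continuous (deriv γ) := hγ.continuous_deriv le_rfl
  have cp' : Continuous (deriv p) := hp.continuous_deriv le_rfl
  have key : ∀ u : ℝ → ℝ, ContDiff ℝ 2 u →
      Differentiable ℝ u ∧ Differentiable ℝ (deriv u) := by
    intro u hu
    rw [show (2 : WithTop ℕ∞) = 1 + 1 from (by norm_num), contDiff_succ_iff_deriv] at hu
    exact ⟨hu.1, hu.2.2.differentiable one_ne_zero⟩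
  have hSL : ∀ u : ℝ → ℝ, ContDiff ℝ 2 u → ∀ x,
      SL γ γ₀ u x = -(deriv γ x * deriv u x + γ x * deriv (deriv u) x) + γ₀ x * u x := by
    intro u hu x
    have h := ((dγ x).hasDerivAt.mul ((key u hu).2 x).hasDerivAt).deriv
    have h' : deriv (fun y => γ y * deriv u y) x
      = deriv γ x * deriv u x + γ x * deriv (deriv u) x := h
    simp only [SL, h']
  obtain ⟨d1φ, d2φ⟩ := key φ hφ2
  have hpφ : ∀ x, deriv (fun y => p y * φ y) x = deriv p x * φ x + p x * deriv φ x := fun x =>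
    ((dp x).hasDerivAt.mul (d1φ x).hasDerivAt).deriv
  have hne : ∀ x ∈ Icc (0:ℝ) Real.pi, γ x ≠ 0 := fun x hx => (hγpos x hx).ne'
  obtain ⟨A, cA, hA⟩ := sl_extend hpi (f := fun x => -deriv γ x / γ x)
    (cγ'.neg.continuousOn.div dγ.continuous.continuousOn hne)
  obtain ⟨B, cB, hB⟩ := sl_extend hpi (f := fun x => (γ₀ x - lam) / γ x)
    ((hγ₀.sub continuousOn_const).div dγ.continuous.continuousOn hne)
  obtain ⟨G, cG, hG⟩ := sl_extend hpi
    (f := fun x => -((deriv p x * φ x + p x * deriv φ x) - q x * φ x + I * φ x) / γ x)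
    (ContinuousOn.div (((((cp'.mul d1φ.continuous).add
      (dp.continuous.mul d2φ.continuous)).continuousOn.sub
      (hq.mul d1φ.continuous.continuousOn)).add
      (continuous_const.mul d1φ.continuous).continuousOn).neg) dγ.continuous.continuousOn hne)
  obtain ⟨ψ, hψ2, hψ0, hψ0', hψ⟩ := sl_exists hpi cA cB cG
  obtain ⟨d1ψ, d2ψ⟩ := key ψ hψ2
  have hψode : ∀ x ∈ Icc (0:ℝ) Real.pi, γ x * deriv (deriv ψ) x = -deriv γ x * deriv ψ x +
      (γ₀ x - lam) * ψ x - ((deriv p x * φ x + p x * deriv φ x) - q x * φ x + I * φ x) := by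
    intro x hx
    have := hne x hx
    rw [hψ x hx, hA x hx, hB x hx, hG x hx]
    field_simp
    ring
  have hφode : ∀ x ∈ Icc (0:ℝ) Real.pi, γ x * deriv (deriv φ) x = -deriv γ x * deriv φ x +
      (γ₀ x - lam) * φ x := by
    intro x hx
    have := hode x hx
    rw [hSL φ hφ2] at this
    linarith
  refine ⟨ψ, hψ2, fun x hx => ?_, hψ0, ?_⟩
  · rw [hSL ψ hψ2, hpφ]
    linarith [hψode x hx]
  have hφ' : deriv φ Real.pi ≠ 0 := by
    intro h
    refine hφx₀ (sl_unique cA cB d1φ d2φ (fun t ht => ?_) hφπ h x₀ hx₀)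
    have hn := hne t ht
    rw [hA t ht, hB t ht]
    have := hφode t ht
    field_simp
    linarith
  -- the Lagrange identity
  let W : ℝ → ℝ := fun x => γ x * (deriv ψ x * φ x - ψ x * deriv φ x) + p x * φ x ^ 2 / 2
  let W' : ℝ → ℝ := fun x => (q x - (1/2) * deriv p x) * (φ x) ^ 2 - I * φ x ^ 2
  have hW : ∀ x ∈ Icc (0:ℝ) Real.pi, HasDerivAt W (W' x) x := by
    intro x hx
    have a := (dγ x).hasDerivAt
    have b := (d1ψ x).hasDerivAt
    have b' := (d2ψ x).hasDerivAt
    have c := (d1φ x).hasDerivAt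
    have c' := (d2φ x).hasDerivAt
    have d := (dp x).hasDerivAt
    have := (a.mul ((b'.mul c).sub (b.mul c'))).add ((d.mul (c.pow 2)).div_const 2)
    refine this.congr_deriv ?_
    simp only [W', Pi.mul_apply, Pi.sub_apply, Pi.pow_apply]
    have e1 := hψode x hx
    have e2 := hφode x hx
    push_cast
    linear_combination φ x * e1 - ψ x * e2
  have i1 : IntervalIntegrable (fun x => (q x - (1/2) * deriv p x) * (φ x) ^ 2) volume 0
      Real.pi := by
    apply ContinuousOn.intervalIntegrable
    rw [uIcc_of_le hpi]
    exact (hq.sub (continuous_const.mul cp').continuousOn).mul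
      (d1φ.continuous.pow 2).continuousOn
  have i2 : IntervalIntegrable (fun x => I * (φ x) ^ 2) volume 0 Real.pi :=
    (continuous_const.mul (d1φ.continuous.pow 2)).intervalIntegrable _ _
  have hint := integral_eq_sub_of_hasDerivAt (f := W) (f' := W') (a := 0) (b := Real.pi)
    (by rw [uIcc_of_le hpi]; exact hW) (i1.sub i2)
  simp only [W'] at hint
  rw [integral_sub i1 i2, intervalIntegral.integral_const_mul, hnorm, ← hI] at hint
  simp only [W, hφ0, hφπ, hψ0] at hint
  have h0 : γ Real.pi * (ψ Real.pi * deriv φ Real.pi) = 0 := by linarith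
  have := hne Real.pi ⟨hpi, le_rfl⟩
  simpa [this, hφ'] using h0
end

section
/- Let ω be a nonempty open subset of (0,π), λ ∈ ℝ, φ a Dirichlet eigenfunction of 𝔏 for λ, and ψ a twice continuously differentiable solution of 𝔏ψ = λψ on [0,π] that is linearly independent from φ. Let F : [0,π] → ℝ be continuous. Then the following are equivalent: (i) there exists a twice continuously differentiable u : [0,π] → ℝ with 𝔏u − λu = F on (0,π), u(0) = u(π) = 0, and u = 0 on ω; (ii) F = 0 on ω, and for every connected component C of the closure of (0,π) \ ω one has ∫_C F φ dx = 0, and moreover ∫_C F ψ dx = 0 whenever C ∩ {0,π} = ∅. -/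
open Set

open MeasureTheory Filter Topology

lemma aux_diff {γ u : ℝ → ℝ} (hγ : ContDiff ℝ 1 γ) (hu : ContDiff ℝ 2 u) :
    ContDiff ℝ 1 (fun y => γ y * deriv u y) := by
  have h : ContDiff ℝ 1 (deriv u) := by
    have : ContDiff ℝ (1+1) u := by simpa [one_add_one_eq_two] using hu
    exact (contDiff_succ_iff_deriv.1 this).2.2
  exact hγ.mul h

lemma aux_hasDeriv {γ u : ℝ → ℝ} (γ₀ : ℝ → ℝ) (hγ : ContDiff ℝ 1 γ) (hu : ContDiff ℝ 2 u) (x : ℝ) :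
    HasDerivAt (fun y => γ y * deriv u y) (γ₀ x * u x - SL γ γ₀ u x) x := by
  have h := ((aux_diff hγ hu).differentiable one_ne_zero x).hasDerivAt
  refine h.congr_deriv ?_
  simp [SL]

lemma aux_hasDeriv_self {u : ℝ → ℝ} (hu : ContDiff ℝ 2 u) (x : ℝ) :
    HasDerivAt u (deriv u x) x := (hu.differentiable two_ne_zero x).hasDerivAt

lemma aux_unique {γ γ₀ w : ℝ → ℝ} {lam : ℝ} (hγ : ContDiff ℝ 1 γ)
    (hγpos : ∀ x ∈ Set.Icc (0:ℝ) Real.pi, 0 < γ x)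
    (hγ₀ : ContinuousOn γ₀ (Set.Icc 0 Real.pi))
    (hw : ContDiff ℝ 2 w) (hweq : ∀ x ∈ Set.Icc (0:ℝ) Real.pi, SL γ γ₀ w x = lam * w x)
    (h0 : w 0 = 0) (h1 : deriv w 0 = 0) : ∀ x ∈ Set.Icc (0:ℝ) Real.pi, w x = 0 := by
  have hc1 : ContinuousOn (fun x => (γ x)⁻¹) (Set.Icc 0 Real.pi) :=
    hγ.continuous.continuousOn.inv₀ (fun x hx => (hγpos x hx).ne')
  have hc2 : ContinuousOn (fun x => γ₀ x - lam) (Set.Icc 0 Real.pi) := hγ₀.sub continuousOn_const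
  obtain ⟨M1, hM1⟩ := isCompact_Icc.exists_bound_of_continuousOn hc1
  obtain ⟨M2, hM2⟩ := isCompact_Icc.exists_bound_of_continuousOn hc2
  have key := eq_zero_of_abs_deriv_le_mul_abs_self_of_eq_zero_right
    (f := fun x => (w x, γ x * deriv w x))
    (f' := fun x => (deriv w x, (γ₀ x - lam) * w x)) (K := max M1 M2) (a := 0) (b := Real.pi)
    (hw.continuous.prodMk (aux_diff hγ hw).continuous).continuousOn
    (fun x hx => by
      have h2 := aux_hasDeriv γ₀ hγ hw x
      rw [hweq x (Ico_subset_Icc_self hx), ← sub_mul] at h2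
      exact ((aux_hasDeriv_self hw x).prodMk h2).hasDerivWithinAt)
    (by simp [h0, h1])
    (fun x hx => by
      have hx' := Ico_subset_Icc_self hx
      have a1 := hM1 x hx'
      have a2 := hM2 x hx'
      have hp := hγpos x hx'
      have n1 : ‖w x‖ ≤ ‖(w x, γ x * deriv w x)‖ := norm_fst_le (w x, γ x * deriv w x)
      have n2 : ‖γ x * deriv w x‖ ≤ ‖(w x, γ x * deriv w x)‖ := norm_snd_le (w x, γ x * deriv w x)
      have hM1' : 0 ≤ M1 := (norm_nonneg _).trans a1
      have hM2' : 0 ≤ M2 := (norm_nonneg _).trans a2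
      refine norm_prod_le_iff.2 ⟨?_, ?_⟩
      · have : deriv w x = (γ x)⁻¹ * (γ x * deriv w x) := by field_simp
        show ‖deriv w x‖ ≤ _
        refine (congrArg norm this).le.trans ?_
        rw [norm_mul]
        exact mul_le_mul (a1.trans (le_max_left _ _)) n2 (norm_nonneg _)
          (hM1'.trans (le_max_left _ _))
      · show ‖(γ₀ x - lam) * w x‖ ≤ _
        rw [norm_mul]
        exact mul_le_mul (a2.trans (le_max_right _ _)) n1 (norm_nonneg _)
          (hM1'.trans (le_max_left _ _)))
  intro x hx
  exact congrArg Prod.fst (key x hx)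

lemma aux_K_sub {ω : Set ℝ} : closure (Set.Ioo 0 Real.pi \ ω) ⊆ Set.Icc 0 Real.pi :=
  closure_minimal (sdiff_subset.trans Ioo_subset_Icc_self) isClosed_Icc

lemma aux_comp_Icc {ω : Set ℝ} {x : ℝ} (hx : x ∈ closure (Set.Ioo 0 Real.pi \ ω)) :
    ∃ c d, c ≤ d ∧ 0 ≤ c ∧ d ≤ Real.pi ∧
      connectedComponentIn (closure (Set.Ioo 0 Real.pi \ ω)) x = Set.Icc c d := by
  set K := closure (Set.Ioo 0 Real.pi \ ω) with hK
  have hKc : IsCompact K := isCompact_Icc.of_isClosed_subset isClosed_closure aux_K_sub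
  have hcl : IsClosed (connectedComponentIn K x) := by
    rw [← closure_subset_iff_isClosed]
    exact isPreconnected_connectedComponentIn.closure.subset_connectedComponentIn
      (subset_closure (mem_connectedComponentIn hx))
      (closure_minimal (connectedComponentIn_subset _ _) isClosed_closure)
  have hcon : IsConnected (connectedComponentIn K x) := isConnected_connectedComponentIn_iff.2 hx
  have h := eq_Icc_of_connected_compact hcon
    (hKc.of_isClosed_subset hcl (connectedComponentIn_subset _ _))
  have hne := hcon.nonempty
  rw [h, nonempty_Icc] at hne
  have hs : connectedComponentIn K x ⊆ Set.Icc 0 Real.pi :=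
    (connectedComponentIn_subset _ _).trans aux_K_sub
  rw [h] at hs
  exact ⟨_, _, hne, (hs (left_mem_Icc.2 hne)).1, (hs (right_mem_Icc.2 hne)).2, h⟩

lemma aux_nhds {ω : Set ℝ} {x y : ℝ} (hy : y ∈ Set.Ioo 0 Real.pi) (hyω : y ∉ closure ω)
    (hyx : y ∈ connectedComponentIn (closure (Set.Ioo 0 Real.pi \ ω)) x) :
    connectedComponentIn (closure (Set.Ioo 0 Real.pi \ ω)) x ∈ 𝓝 y := by
  rw [connectedComponentIn_eq hyx]
  apply connectedComponentIn_mem_nhds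
  have h1 : Set.Ioo 0 Real.pi ∈ 𝓝 y := isOpen_Ioo.mem_nhds hy
  have h2 : (closure ω)ᶜ ∈ 𝓝 y := isClosed_closure.isOpen_compl.mem_nhds hyω
  filter_upwards [h1, h2] with z hz hz2
  exact subset_closure ⟨hz, fun h => hz2 (subset_closure h)⟩

lemma aux_int {ω : Set ℝ} {g : ℝ → ℝ} (hg : ContinuousOn g (Set.Icc 0 Real.pi))
    (hg0 : ∀ x ∈ closure ω, g x = 0) {a b : ℝ} (hab : a ≤ b) (ha : 0 ≤ a) (hb : b ≤ Real.pi)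
    (haK : a = 0 ∨ a ∉ closure (Set.Ioo 0 Real.pi \ ω))
    (hbK : b = Real.pi ∨ b ∉ closure (Set.Ioo 0 Real.pi \ ω))
    (hcompint : ∀ x ∈ closure (Set.Ioo 0 Real.pi \ ω),
      connectedComponentIn (closure (Set.Ioo 0 Real.pi \ ω)) x ⊆ Set.Icc a b →
      ∫ y in connectedComponentIn (closure (Set.Ioo 0 Real.pi \ ω)) x, g y = 0) :
    ∫ y in a..b, g y = 0 := by
  set K := closure (Set.Ioo 0 Real.pi \ ω) with hK
  set W := Set.Ioo a b \ closure ω with hW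
  have hsub : Set.Icc a b ⊆ Set.Icc 0 Real.pi := Icc_subset_Icc ha hb
  have hW0 : ∀ x ∈ W, x ∈ Set.Ioo 0 Real.pi := fun x hx => Ioo_subset_Ioo ha hb hx.1
  have hWK : W ⊆ K := fun x hx =>
    subset_closure ⟨hW0 x hx, fun h => hx.2 (subset_closure h)⟩
  let T : Set (Set ℝ) := (fun x => connectedComponentIn K x) '' W
  have hTdisj : T.PairwiseDisjoint id := by
    rintro _ ⟨x, hx, rfl⟩ _ ⟨y, hy, rfl⟩ hne
    refine Set.disjoint_left.2 fun z hz1 hz2 => hne ?_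
    exact (connectedComponentIn_eq hz1).trans (connectedComponentIn_eq hz2).symm
  have hTc : T.Countable := by
    refine hTdisj.countable_of_nonempty_interior ?_
    rintro _ ⟨x, hx, rfl⟩
    exact ⟨x, mem_interior_iff_mem_nhds.2
      (aux_nhds (hW0 x hx) hx.2 (mem_connectedComponentIn (hWK hx)))⟩
  have hTsub : ∀ C ∈ T, C ⊆ Set.Icc a b := by
    rintro _ ⟨x, hx, rfl⟩ z hz
    have hzK := connectedComponentIn_subset _ _ hz
    have hz0 := aux_K_sub hzK
    have hord : OrdConnected (connectedComponentIn K x) :=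
      isPreconnected_connectedComponentIn.ordConnected
    have hxm := mem_connectedComponentIn (hWK hx)
    constructor
    · by_contra! hlt
      rcases haK with h | h
      · exact absurd hz0.1 (by linarith)
      · exact h (connectedComponentIn_subset _ _ (hord.out hz hxm ⟨hlt.le, hx.1.1.le⟩))
    · by_contra! hlt
      rcases hbK with h | h
      · exact absurd hz0.2 (by linarith)
      · exact h (connectedComponentIn_subset _ _ (hord.out hxm hz ⟨hx.1.2.le, hlt.le⟩))
  have hgi : IntegrableOn g (Set.Icc a b) := (hg.mono hsub).integrableOn_Icc
  have hTU : ⋃₀ T ⊆ Set.Icc a b := sUnion_subset hTsub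
  have hTm : ∀ C ∈ T, MeasurableSet C := by
    rintro _ ⟨x, hx, rfl⟩
    obtain ⟨c, d, -, -, -, h⟩ := aux_comp_Icc (hWK hx)
    show MeasurableSet (connectedComponentIn K x)
    rw [h]; exact measurableSet_Icc
  have : Countable T := hTc.to_subtype
  have hU0 : ∫ y in ⋃₀ T, g y = 0 := by
    rw [sUnion_eq_iUnion, integral_iUnion (s := fun i : T => (i : Set ℝ)) (fun i => hTm i i.2)
      (fun i j hij => hTdisj i.2 j.2 (fun h => hij (Subtype.ext h)))
      (by rw [← sUnion_eq_iUnion]; exact hgi.mono_set hTU)]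
    have : ∀ i : T, ∫ y in (i : Set ℝ), g y = 0 := by
      rintro ⟨C, hC⟩
      obtain ⟨x, hx, hxC⟩ := hC
      have h1 := hcompint x (hWK hx) (hTsub _ ⟨x, hx, rfl⟩)
      simp only at hxC
      rw [hxC] at h1
      exact h1
    simp [this]
  rw [intervalIntegral.integral_of_le hab, integral_Ioc_eq_integral_Ioo,
    ← integral_Icc_eq_integral_Ioo]
  have hae : ∀ᵐ y, y ∈ Set.Icc a b \ ⋃₀ T → g y = 0 := by
    have e1 : ∀ᵐ y : ℝ, y ≠ a := by simp [ae_iff, measure_singleton]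
    have e2 : ∀ᵐ y : ℝ, y ≠ b := by simp [ae_iff, measure_singleton]
    filter_upwards [e1, e2] with y h1 h2 hy
    apply hg0
    by_contra hcon
    have hyW : y ∈ W := ⟨⟨lt_of_le_of_ne hy.1.1 (Ne.symm h1), lt_of_le_of_ne hy.1.2 h2⟩, hcon⟩
    exact hy.2 ⟨_, ⟨y, hyW, rfl⟩, mem_connectedComponentIn (hWK hyW)⟩
  rw [← hU0]
  exact setIntegral_eq_of_subset_of_ae_sdiff_eq_zero measurableSet_Icc.nullMeasurableSet hTU hae

lemma aux_green {γ γ₀ u v F : ℝ → ℝ} {lam : ℝ} (hγ : ContDiff ℝ 1 γ)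
    (hu : ContDiff ℝ 2 u) (hv : ContDiff ℝ 2 v)
    (hueq : ∀ x ∈ Set.Ioo (0:ℝ) Real.pi, SL γ γ₀ u x - lam * u x = F x)
    (hveq : ∀ x ∈ Set.Icc (0:ℝ) Real.pi, SL γ γ₀ v x = lam * v x)
    (hF : ContinuousOn F (Set.Icc 0 Real.pi)) {c d : ℝ} (hcd : c ≤ d) (hc : 0 ≤ c)
    (hd : d ≤ Real.pi)
    (hbc : u c * (γ c * deriv v c) - γ c * deriv u c * v c = 0)
    (hbd : u d * (γ d * deriv v d) - γ d * deriv u d * v d = 0) :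
    ∫ y in Set.Icc c d, F y * v y = 0 := by
  rw [integral_Icc_eq_integral_Ioc, ← intervalIntegral.integral_of_le hcd]
  have hcont : Continuous (fun x => u x * (γ x * deriv v x) - γ x * deriv u x * v x) :=
    (hu.continuous.mul (aux_diff hγ hv).continuous).sub
      ((aux_diff hγ hu).continuous.mul hv.continuous)
  rw [intervalIntegral.integral_eq_sub_of_hasDerivAt_of_le hcd hcont.continuousOn, hbc, hbd, sub_zero]
  · intro x hx
    have hx' : x ∈ Set.Ioo 0 Real.pi := Ioo_subset_Ioo hc hd hx
    have h := ((aux_hasDeriv_self hu x).mul (aux_hasDeriv γ₀ hγ hv x)).sub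
      ((aux_hasDeriv γ₀ hγ hu x).mul (aux_hasDeriv_self hv x))
    refine h.congr_deriv ?_
    rw [hveq x (Ioo_subset_Icc_self hx'), ← hueq x hx']
    ring
  · apply ContinuousOn.intervalIntegrable
    rw [uIcc_of_le hcd]
    exact (hF.mono (Icc_subset_Icc hc hd)).mul hv.continuous.continuousOn

lemma aux_fwd (γ γ₀ : ℝ → ℝ)
    (hγ : ContDiff ℝ 1 γ)
    (ω : Set ℝ) (hωopen : IsOpen ω) (hωsub : ω ⊆ Set.Ioo 0 Real.pi)
    (lam : ℝ) (φ : ℝ → ℝ) (hφ : IsDirichletEF γ γ₀ lam φ)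
    (ψ : ℝ → ℝ) (hψ : ContDiff ℝ 2 ψ)
    (hψeq : ∀ x ∈ Set.Icc (0:ℝ) Real.pi, SL γ γ₀ ψ x = lam * ψ x)
    (F : ℝ → ℝ) (hF : ContinuousOn F (Set.Icc 0 Real.pi))
    (u : ℝ → ℝ) (hu : ContDiff ℝ 2 u)
    (hueq : ∀ x ∈ Set.Ioo (0:ℝ) Real.pi, SL γ γ₀ u x - lam * u x = F x)
    (hu0 : u 0 = 0) (hupi : u Real.pi = 0) (huω : ∀ x ∈ ω, u x = 0) :
    ((∀ x ∈ ω, F x = 0) ∧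
      ∀ x ∈ closure (Set.Ioo 0 Real.pi \ ω),
        (∫ y in connectedComponentIn (closure (Set.Ioo 0 Real.pi \ ω)) x,
            F y * φ y = 0) ∧
        (connectedComponentIn (closure (Set.Ioo 0 Real.pi \ ω)) x
            ∩ ({0, Real.pi} : Set ℝ) = ∅ →
          ∫ y in connectedComponentIn (closure (Set.Ioo 0 Real.pi \ ω)) x,
            F y * ψ y = 0)) := by
  obtain ⟨hφ2, -, hφeq, hφ0, hφpi⟩ := hφ
  have hev : ∀ x ∈ ω, u =ᶠ[𝓝 x] fun _ => 0 := fun x hx => by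
    filter_upwards [hωopen.mem_nhds hx] with y hy using huω y hy
  have hdω : ∀ x ∈ ω, deriv u x = 0 := fun x hx => by
    rw [(hev x hx).deriv_eq]; simp
  have hdc : Continuous (deriv u) := hu.continuous_deriv one_le_two
  have hcl : ∀ x ∈ closure ω, u x = 0 ∧ deriv u x = 0 := fun x hx =>
    ⟨closure_minimal (t := {x | u x = 0}) huω (isClosed_eq hu.continuous continuous_const) hx,
     closure_minimal (t := {x | deriv u x = 0}) hdω (isClosed_eq hdc continuous_const) hx⟩
  refine ⟨fun x hx => ?_, fun x hx => ?_⟩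
  · rw [← hueq x (hωsub hx), huω x hx]
    have : (fun y => γ y * deriv u y) =ᶠ[𝓝 x] fun _ => 0 := by
      filter_upwards [hωopen.mem_nhds hx] with y hy
      rw [hdω y hy, mul_zero]
    simp [SL, this.deriv_eq, huω x hx]
  · obtain ⟨c, d, hcd, hc, hd, hC⟩ := aux_comp_Icc hx
    rcases hcd.eq_or_lt with rfl | hlt
    · rw [hC]; simp
    have hc' : c = 0 ∨ (u c = 0 ∧ deriv u c = 0) := by
      rcases hc.eq_or_lt with h | h
      · exact Or.inl h.symm
      right; apply hcl; by_contra hn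
      have := aux_nhds (x := x) ⟨h, hlt.trans_le hd⟩ hn (by rw [hC]; exact left_mem_Icc.2 hcd)
      rw [hC, Icc_mem_nhds_iff] at this
      exact lt_irrefl _ this.1
    have hd' : d = Real.pi ∨ (u d = 0 ∧ deriv u d = 0) := by
      rcases hd.eq_or_lt with h | h
      · exact Or.inl h
      right; apply hcl; by_contra hn
      have := aux_nhds (x := x) ⟨hc.trans_lt hlt, h⟩ hn (by rw [hC]; exact right_mem_Icc.2 hcd)
      rw [hC, Icc_mem_nhds_iff] at this
      exact lt_irrefl _ this.2
    rw [hC]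
    constructor
    · apply aux_green hγ hu hφ2 hueq hφeq hF hcd hc hd
      · rcases hc' with h | ⟨h1, h2⟩
        · subst h; simp [hu0, hφ0]
        · simp [h1, h2]
      · rcases hd' with h | ⟨h1, h2⟩
        · subst h; simp [hupi, hφpi]
        · simp [h1, h2]
    · intro hemp
      have hn : ∀ z ∈ Set.Icc c d, z ∉ ({0, Real.pi} : Set ℝ) := fun z hz hz2 =>
        (hemp ▸ (⟨hz, hz2⟩ : z ∈ Set.Icc c d ∩ {0, Real.pi}) : z ∈ (∅ : Set ℝ))
      apply aux_green hγ hu hψ hueq hψeq hF hcd hc hd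
      · rcases hc' with h | ⟨h1, h2⟩
        · exact absurd (by simp [h]) (hn c (left_mem_Icc.2 hcd))
        · simp [h1, h2]
      · rcases hd' with h | ⟨h1, h2⟩
        · exact absurd (by simp [h]) (hn d (right_mem_Icc.2 hcd))
        · simp [h1, h2]

lemma aux_wronsk (γ γ₀ : ℝ → ℝ)
    (hγ : ContDiff ℝ 1 γ) (hγpos : ∀ x ∈ Set.Icc (0:ℝ) Real.pi, 0 < γ x)
    (hγ₀ : ContinuousOn γ₀ (Set.Icc 0 Real.pi))
    (lam : ℝ) (φ : ℝ → ℝ) (hφ : IsDirichletEF γ γ₀ lam φ)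
    (ψ : ℝ → ℝ) (hψ : ContDiff ℝ 2 ψ)
    (hψeq : ∀ x ∈ Set.Icc (0:ℝ) Real.pi, SL γ γ₀ ψ x = lam * ψ x)
    (hindep : ∀ c d : ℝ,
      (∀ x ∈ Set.Icc (0:ℝ) Real.pi, c * φ x + d * ψ x = 0) → c = 0 ∧ d = 0) :
    ∃ P : ℝ, P ≠ 0 ∧ ∀ x ∈ Set.Icc (0:ℝ) Real.pi,
      φ x * (γ x * deriv ψ x) - γ x * deriv φ x * ψ x = P := by
  obtain ⟨hφ2, ⟨z, hz, hφz⟩, hφeq, hφ0, hφpi⟩ := hφ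
  have hpi := Real.pi_pos.le
  have h0m : (0:ℝ) ∈ Set.Icc 0 Real.pi := ⟨le_rfl, hpi⟩
  refine ⟨φ 0 * (γ 0 * deriv ψ 0) - γ 0 * deriv φ 0 * ψ 0, ?_, fun x hx => ?_⟩
  · have hφ' : deriv φ 0 ≠ 0 := fun h =>
      hφz (aux_unique hγ hγpos hγ₀ hφ2 hφeq hφ0 h z hz)
    have hψ0 : ψ 0 ≠ 0 := by
      intro h
      let w : ℝ → ℝ := fun x => deriv ψ 0 * φ x + (-deriv φ 0) * ψ x
      have hw : ContDiff ℝ 2 w := (contDiff_const.mul hφ2).add (contDiff_const.mul hψ)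
      have hdw : ∀ x, deriv w x = deriv ψ 0 * deriv φ x + (-deriv φ 0) * deriv ψ x := fun x =>
        (((aux_hasDeriv_self hφ2 x).const_mul _).add ((aux_hasDeriv_self hψ x).const_mul _)).deriv
      have hweq : ∀ x ∈ Set.Icc (0:ℝ) Real.pi, SL γ γ₀ w x = lam * w x := by
        intro x hx
        have e : (fun y => γ y * deriv w y) = fun y =>
            deriv ψ 0 * (γ y * deriv φ y) + (-deriv φ 0) * (γ y * deriv ψ y) := by
          funext y; rw [hdw]; ring
        have h1 := ((aux_hasDeriv γ₀ hγ hφ2 x).const_mul (deriv ψ 0)).add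
          ((aux_hasDeriv γ₀ hγ hψ x).const_mul (-deriv φ 0))
        have h2 := (congrArg (fun f => deriv f x) e).trans h1.deriv
        rw [hφeq x hx, hψeq x hx] at h2
        simp only [SL]
        rw [h2]
        simp only [w]
        ring
      have := aux_unique hγ hγpos hγ₀ hw hweq (by simp [w, hφ0, h]) (by rw [hdw]; ring)
      exact hφ' (by simpa using (hindep _ _ this).2)
    rw [hφ0]
    have := (hγpos 0 h0m).ne'
    simp [hφ', hψ0, this]
  · have hd : ∀ y ∈ Set.Icc (0:ℝ) Real.pi,
        HasDerivAt (fun x => φ x * (γ x * deriv ψ x) - γ x * deriv φ x * ψ x) 0 y := by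
      intro y hy
      have h := ((aux_hasDeriv_self hφ2 y).mul (aux_hasDeriv γ₀ hγ hψ y)).sub
        ((aux_hasDeriv γ₀ hγ hφ2 y).mul (aux_hasDeriv_self hψ y))
      refine h.congr_deriv ?_
      rw [hφeq y hy, hψeq y hy]
      ring
    exact constant_of_has_deriv_right_zero
      (fun y hy => (hd y hy).continuousAt.continuousWithinAt)
      (fun y hy => (hd y (Ico_subset_Icc_self hy)).hasDerivWithinAt) x hx

lemma aux_bwd (γ γ₀ : ℝ → ℝ)
    (hγ : ContDiff ℝ 1 γ) (hγpos : ∀ x ∈ Set.Icc (0:ℝ) Real.pi, 0 < γ x)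
    (hγ₀ : ContinuousOn γ₀ (Set.Icc 0 Real.pi))
    (ω : Set ℝ) (hωopen : IsOpen ω) (hωsub : ω ⊆ Set.Ioo 0 Real.pi)
    (hωne : ω.Nonempty)
    (lam : ℝ) (φ : ℝ → ℝ) (hφ : IsDirichletEF γ γ₀ lam φ)
    (ψ : ℝ → ℝ) (hψ : ContDiff ℝ 2 ψ)
    (hψeq : ∀ x ∈ Set.Icc (0:ℝ) Real.pi, SL γ γ₀ ψ x = lam * ψ x)
    (hindep : ∀ c d : ℝ,
      (∀ x ∈ Set.Icc (0:ℝ) Real.pi, c * φ x + d * ψ x = 0) → c = 0 ∧ d = 0)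
    (F : ℝ → ℝ) (hF : ContinuousOn F (Set.Icc 0 Real.pi))
    (hFω : ∀ x ∈ ω, F x = 0)
    (hcomp : ∀ x ∈ closure (Set.Ioo 0 Real.pi \ ω),
        (∫ y in connectedComponentIn (closure (Set.Ioo 0 Real.pi \ ω)) x,
            F y * φ y = 0) ∧
        (connectedComponentIn (closure (Set.Ioo 0 Real.pi \ ω)) x
            ∩ ({0, Real.pi} : Set ℝ) = ∅ →
          ∫ y in connectedComponentIn (closure (Set.Ioo 0 Real.pi \ ω)) x,
            F y * ψ y = 0)) :
    ∃ u : ℝ → ℝ, ContDiff ℝ 2 u ∧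
        (∀ x ∈ Set.Ioo (0:ℝ) Real.pi, SL γ γ₀ u x - lam * u x = F x) ∧
        u 0 = 0 ∧ u Real.pi = 0 ∧ (∀ x ∈ ω, u x = 0) := by
  obtain ⟨P, hP, hPW⟩ := aux_wronsk γ γ₀ hγ hγpos hγ₀ lam φ hφ ψ hψ hψeq hindep
  obtain ⟨hφ2, -, hφeq, hφ0, hφpi⟩ := hφ
  have hpi := Real.pi_pos.le
  obtain ⟨x0, hx0⟩ := hωne
  have hx0I := hωsub hx0
  have hclsub : closure ω ⊆ Set.Icc 0 Real.pi :=
    closure_minimal (hωsub.trans Ioo_subset_Icc_self) isClosed_Icc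
  have hFcl : ∀ x ∈ closure ω, F x = 0 := by
    intro x hx
    have := (hF.mono hclsub)
    have hcl : closure ω ⊆ {x | x ∈ closure ω ∧ F x = 0} :=
      closure_minimal (fun y hy => ⟨subset_closure hy, hFω y hy⟩)
        (this.preimage_isClosed_of_isClosed isClosed_closure isClosed_singleton)
    exact (hcl hx).2
  have hωK : ∀ x ∈ ω, x ∉ closure (Set.Ioo 0 Real.pi \ ω) := fun x hx hxK => by
    obtain ⟨y, hy1, hy2⟩ := mem_closure_iff.1 hxK ω hωopen hx
    exact hy2.2 hy1
  have hFφ : ContinuousOn (fun y => F y * φ y) (Set.Icc 0 Real.pi) :=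
    hF.mul hφ2.continuous.continuousOn
  have hFψ : ContinuousOn (fun y => F y * ψ y) (Set.Icc 0 Real.pi) :=
    hF.mul hψ.continuous.continuousOn
  have intφ : ∀ a b, a ≤ b → (a = 0 ∨ a ∈ ω) → (b = Real.pi ∨ b ∈ ω) →
      ∫ y in a..b, F y * φ y = 0 := by
    intro a b hab ha hb
    refine aux_int hFφ (fun x hx => by simp [hFcl x hx]) hab ?_ ?_ (ha.imp id (hωK a))
      (hb.imp id (hωK b)) (fun x hx _ => (hcomp x hx).1)
    · exact ha.elim (fun h => h.ge) (fun h => (hωsub h).1.le)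
    · exact hb.elim (fun h => h.le) (fun h => (hωsub h).2.le)
  have intψ : ∀ a b, a ≤ b → a ∈ ω → b ∈ ω → ∫ y in a..b, F y * ψ y = 0 := by
    intro a b hab ha hb
    refine aux_int hFψ (fun x hx => by simp [hFcl x hx]) hab (hωsub ha).1.le (hωsub hb).2.le
      (Or.inr (hωK a ha)) (Or.inr (hωK b hb)) (fun x hx hs => (hcomp x hx).2 ?_)
    ext z
    simp only [mem_inter_iff, mem_insert_iff, mem_singleton_iff, mem_empty_iff_false, iff_false]
    rintro ⟨hz, h | h⟩
    · have := (hs hz).1; have := (hωsub ha).1; linarith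
    · have := (hs hz).2; have := (hωsub hb).2; linarith
  let G : ℝ → ℝ := Set.IccExtend hpi (Set.domRestrict (Set.Icc 0 Real.pi) F)
  have hG : Continuous G := (continuousOn_iff_continuous_domRestrict.1 hF).Icc_extend'
  have hGF : ∀ x ∈ Set.Icc (0:ℝ) Real.pi, G x = F x := fun x hx => by
    simp only [G]; rw [IccExtend_of_mem _ _ hx]; rfl
  let A : ℝ → ℝ := fun x => ∫ y in x0..x, G y * φ y
  let B : ℝ → ℝ := fun x => ∫ y in x0..x, G y * ψ y
  have hcA : Continuous fun y => G y * φ y := hG.mul hφ2.continuous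
  have hcB : Continuous fun y => G y * ψ y := hG.mul hψ.continuous
  have hA : ∀ x, HasDerivAt A (G x * φ x) x := fun x => hcA.integral_hasStrictDerivAt x0 x |>.hasDerivAt
  have hB : ∀ x, HasDerivAt B (G x * ψ x) x := fun x => hcB.integral_hasStrictDerivAt x0 x |>.hasDerivAt
  have c1 : ∀ {f f' : ℝ → ℝ}, (∀ x, HasDerivAt f (f' x) x) → Continuous f' → ContDiff ℝ 1 f := by
    intro f f' h hc
    refine contDiff_one_iff_deriv.2 ⟨fun x => (h x).differentiableAt, ?_⟩
    rwa [show deriv f = f' from funext fun x => (h x).deriv]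
  have hA1 : ContDiff ℝ 1 A := c1 hA hcA
  have hB1 : ContDiff ℝ 1 B := c1 hB hcB
  have hAI : ∀ x ∈ Set.Icc (0:ℝ) Real.pi, A x = ∫ y in x0..x, F y * φ y := fun x hx =>
    intervalIntegral.integral_congr fun y hy => by
      have : y ∈ Set.Icc 0 Real.pi := (uIcc_subset_Icc (Ioo_subset_Icc_self hx0I) hx) hy
      simp only [hGF y this]
  have hBI : ∀ x ∈ Set.Icc (0:ℝ) Real.pi, B x = ∫ y in x0..x, F y * ψ y := fun x hx =>
    intervalIntegral.integral_congr fun y hy => by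
      have : y ∈ Set.Icc 0 Real.pi := (uIcc_subset_Icc (Ioo_subset_Icc_self hx0I) hx) hy
      simp only [hGF y this]
  let u : ℝ → ℝ := fun x => -P⁻¹ * (ψ x * A x - φ x * B x)
  have hdu : ∀ x, HasDerivAt u (-P⁻¹ * (deriv ψ x * A x - deriv φ x * B x)) x := by
    intro x
    have h := (((aux_hasDeriv_self hψ x).mul (hA x)).sub
      ((aux_hasDeriv_self hφ2 x).mul (hB x))).const_mul (-P⁻¹)
    refine h.congr_deriv ?_
    ring
  have hdu' : deriv u = fun x => -P⁻¹ * (deriv ψ x * A x - deriv φ x * B x) :=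
    funext fun x => (hdu x).deriv
  have d1 : ∀ {f : ℝ → ℝ}, ContDiff ℝ 2 f → ContDiff ℝ 1 (deriv f) := by
    intro f hf
    have : ContDiff ℝ (1+1) f := by simpa [one_add_one_eq_two] using hf
    exact (contDiff_succ_iff_deriv.1 this).2.2
  have hu2 : ContDiff ℝ 2 u := by
    have : ContDiff ℝ (1+1) u := by
      refine contDiff_succ_iff_deriv.2 ⟨fun x => (hdu x).differentiableAt, by simp, ?_⟩
      rw [hdu']
      exact contDiff_const.mul (((d1 hψ).mul hA1).sub ((d1 hφ2).mul hB1))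
    simpa [one_add_one_eq_two] using this
  refine ⟨u, hu2, ?_, ?_, ?_, ?_⟩
  · intro x hx
    have hx' := Ioo_subset_Icc_self hx
    have e : (fun y => γ y * deriv u y) = fun y =>
        -P⁻¹ * ((γ y * deriv ψ y) * A y - (γ y * deriv φ y) * B y) := by
      funext y; rw [hdu']; ring
    have h := (((aux_hasDeriv γ₀ hγ hψ x).mul (hA x)).sub
      ((aux_hasDeriv γ₀ hγ hφ2 x).mul (hB x))).const_mul (-P⁻¹)
    have h2 := (congrArg (fun f => deriv f x) e).trans h.deriv
    rw [hφeq x hx', hψeq x hx', hGF x hx'] at h2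
    simp only [SL]
    rw [h2]
    have hW := hPW x hx'
    simp only [u]
    have hPP : P⁻¹ * P = 1 := inv_mul_cancel₀ hP
    calc _ = P⁻¹ * (φ x * (γ x * deriv ψ x) - γ x * deriv φ x * ψ x) * F x := by ring
      _ = F x := by rw [hW, hPP, one_mul]
  · have : A 0 = 0 := by
      rw [hAI 0 ⟨le_rfl, hpi⟩, intervalIntegral.integral_symm,
        intφ 0 x0 hx0I.1.le (Or.inl rfl) (Or.inr hx0), neg_zero]
    simp [u, this, hφ0]
  · have : A Real.pi = 0 := by
      rw [hAI _ ⟨hpi, le_rfl⟩, intφ x0 _ hx0I.2.le (Or.inr hx0) (Or.inl rfl)]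
    simp [u, this, hφpi]
  · intro x hx
    have hx' := Ioo_subset_Icc_self (hωsub hx)
    have h1 : A x = 0 := by
      rw [hAI x hx']
      rcases le_total x0 x with h | h
      · exact intφ _ _ h (Or.inr hx0) (Or.inr hx)
      · rw [intervalIntegral.integral_symm, intφ _ _ h (Or.inr hx) (Or.inr hx0), neg_zero]
    have h2 : B x = 0 := by
      rw [hBI x hx']
      rcases le_total x0 x with h | h
      · exact intψ _ _ h hx0 hx
      · rw [intervalIntegral.integral_symm, intψ _ _ h hx hx0, neg_zero]
    simp [u, h1, h2]

theorem stmt3 (γ γ₀ : ℝ → ℝ)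
    (hγ : ContDiff ℝ 1 γ) (hγpos : ∀ x ∈ Set.Icc (0:ℝ) Real.pi, 0 < γ x)
    (hγ₀ : ContinuousOn γ₀ (Set.Icc 0 Real.pi))
    (ω : Set ℝ) (hωopen : IsOpen ω) (hωsub : ω ⊆ Set.Ioo 0 Real.pi)
    (hωne : ω.Nonempty)
    (lam : ℝ) (φ : ℝ → ℝ) (hφ : IsDirichletEF γ γ₀ lam φ)
    (ψ : ℝ → ℝ) (hψ : ContDiff ℝ 2 ψ)
    (hψeq : ∀ x ∈ Set.Icc (0:ℝ) Real.pi, SL γ γ₀ ψ x = lam * ψ x)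
    (hindep : ∀ c d : ℝ,
      (∀ x ∈ Set.Icc (0:ℝ) Real.pi, c * φ x + d * ψ x = 0) → c = 0 ∧ d = 0)
    (F : ℝ → ℝ) (hF : ContinuousOn F (Set.Icc 0 Real.pi)) :
    (∃ u : ℝ → ℝ, ContDiff ℝ 2 u ∧
        (∀ x ∈ Set.Ioo (0:ℝ) Real.pi, SL γ γ₀ u x - lam * u x = F x) ∧
        u 0 = 0 ∧ u Real.pi = 0 ∧ (∀ x ∈ ω, u x = 0))
      ↔
    ((∀ x ∈ ω, F x = 0) ∧
      ∀ x ∈ closure (Set.Ioo 0 Real.pi \ ω),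
        (∫ y in connectedComponentIn (closure (Set.Ioo 0 Real.pi \ ω)) x,
            F y * φ y = 0) ∧
        (connectedComponentIn (closure (Set.Ioo 0 Real.pi \ ω)) x
            ∩ ({0, Real.pi} : Set ℝ) = ∅ →
          ∫ y in connectedComponentIn (closure (Set.Ioo 0 Real.pi \ ω)) x,
            F y * ψ y = 0)) := by
  constructor
  · rintro ⟨u, hu, hueq, hu0, hupi, huω⟩
    exact aux_fwd γ γ₀ hγ ω hωopen hωsub lam φ hφ ψ hψ hψeq F hF u hu hueq hu0 hupi huω
  · rintro ⟨hFω, hcomp⟩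
    exact aux_bwd γ γ₀ hγ hγpos hγ₀ ω hωopen hωsub hωne lam φ hφ ψ hψ hψeq hindep F hF hFω hcomp
end

section
/- Let p : [0,π] → ℝ be continuously differentiable, q : [0,π] → ℝ continuous, λ ∈ ℝ, and let φ be a Dirichlet eigenfunction of 𝔏 for λ with ∫_0^π φ² dx = 1. Set I_λ := ∫_0^π (q − (1/2)p') φ² dx, and let V be the real vector space of pairs (u₁,u₂) of twice continuously differentiable functions on [0,π] with u₁(0) = u₁(π) = u₂(0) = u₂(π) = 0 satisfying 𝔏u₁ + q u₂ − (p u₂)' = λ u₁ and 𝔏u₂ = λ u₂ on (0,π). Then dim V = 1 if I_λ ≠ 0, and dim V = 2 if I_λ = 0. -/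
/-- Membership in the space `V` of pairs `(u₁, u₂)` of C² functions vanishing at `0` and `π`
and satisfying `𝔏u₁ + q u₂ - (p u₂)' = lam u₁` and `𝔏u₂ = lam u₂` on `(0, π)`. -/
noncomputable def MemV (γ γ₀ p q : ℝ → ℝ) (lam : ℝ) (u₁ u₂ : ℝ → ℝ) : Prop :=
  ContDiff ℝ 2 u₁ ∧ ContDiff ℝ 2 u₂ ∧
  u₁ 0 = 0 ∧ u₁ Real.pi = 0 ∧ u₂ 0 = 0 ∧ u₂ Real.pi = 0 ∧
  (∀ x ∈ Set.Ioo (0:ℝ) Real.pi,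
    SL γ γ₀ u₁ x + q x * u₂ x - deriv (fun y => p y * u₂ y) x = lam * u₁ x) ∧
  (∀ x ∈ Set.Ioo (0:ℝ) Real.pi, SL γ γ₀ u₂ x = lam * u₂ x)

section

open Set

lemma aux_P_deriv {γ γ₀ u : ℝ → ℝ} (hγ : ContDiff ℝ 1 γ) (hu : ContDiff ℝ 2 u) (x : ℝ) :
    HasDerivAt (fun y => γ y * deriv u y) (γ₀ x * u x - SL γ γ₀ u x) x := by
  have h1 : ContDiff ℝ 1 (deriv u) := by
    have : ContDiff ℝ (1+1) u := by simpa [one_add_one_eq_two] using hu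
    exact (contDiff_succ_iff_deriv.1 this).2.2
  have h2 : ContDiff ℝ 1 (fun y => γ y * deriv u y) := hγ.mul h1
  have h3 := (h2.differentiable (by norm_num) x).hasDerivAt
  refine h3.congr_deriv ?_
  simp only [SL]
  ring

lemma aux_deriv_cont {u : ℝ → ℝ} (hu : ContDiff ℝ 2 u) : ContDiff ℝ 1 (deriv u) := by
  have : ContDiff ℝ (1+1) u := by simpa [one_add_one_eq_two] using hu
  exact (contDiff_succ_iff_deriv.1 this).2.2

/-- Uniqueness for the first order system. -/
lemma aux_uniq {u w g m : ℝ → ℝ} {T x₀ : ℝ}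
    (hg : ContinuousOn g (Icc 0 T)) (hm : ContinuousOn m (Icc 0 T))
    (hu : ContinuousOn u (Icc 0 T)) (hw : ContinuousOn w (Icc 0 T))
    (hu' : ∀ x ∈ Ioo 0 T, HasDerivAt u (g x * w x) x)
    (hw' : ∀ x ∈ Ioo 0 T, HasDerivAt w (m x * u x) x)
    (hx₀ : x₀ ∈ Icc 0 T) (h0 : u x₀ = 0) (h0' : w x₀ = 0) :
    ∀ x ∈ Icc 0 T, u x = 0 := by
  obtain ⟨K, hK⟩ := (isCompact_Icc (a := (0:ℝ)) (b := T)).exists_bound_of_continuousOn (hg.add hm)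
  have key : ∀ x ∈ Ioo 0 T, |2 * (g x + m x) * (u x * w x)| ≤ K * (u x ^ 2 + w x ^ 2) := by
    intro x hx
    have h1 := hK x (Ioo_subset_Icc_self hx)
    simp only [Real.norm_eq_abs] at h1
    have h2 : 2 * |u x * w x| ≤ u x ^ 2 + w x ^ 2 := by
      rw [abs_mul]
      nlinarith [sq_nonneg (|u x| - |w x|), sq_abs (u x), sq_abs (w x)]
    calc |2 * (g x + m x) * (u x * w x)| = |g x + m x| * (2 * |u x * w x|) := by
          rw [abs_mul, abs_mul]; simp; ring
      _ ≤ K * (u x ^ 2 + w x ^ 2) :=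
          mul_le_mul h1 h2 (by positivity) ((abs_nonneg _).trans h1)
  have hd : ∀ s : ℝ, ∀ x ∈ Ioo 0 T,
      HasDerivAt (fun y => (u y ^ 2 + w y ^ 2) * Real.exp (s * y))
        ((2 * (g x + m x) * (u x * w x) + s * (u x ^ 2 + w x ^ 2)) * Real.exp (s * x)) x := by
    intro s x hx
    have h1 := ((hu' x hx).pow 2).add ((hw' x hx).pow 2)
    have h2 : HasDerivAt (fun y : ℝ => Real.exp (s * y)) (Real.exp (s * x) * (s * 1)) x :=
      ((hasDerivAt_id x).const_mul s).exp
    have h3 := h1.mul h2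
    refine h3.congr_deriv ?_
    simp
    ring
  have hc : ∀ s : ℝ, ContinuousOn (fun y => (u y ^ 2 + w y ^ 2) * Real.exp (s * y)) (Icc 0 T) := by
    intro s
    have : Continuous (fun y : ℝ => Real.exp (s * y)) := by fun_prop
    exact ((hu.pow 2).add (hw.pow 2)).mul this.continuousOn
  have hmono : MonotoneOn (fun y => (u y ^ 2 + w y ^ 2) * Real.exp (K * y)) (Icc 0 T) := by
    apply monotoneOn_of_deriv_nonneg (convex_Icc 0 T) (hc K)
    · rw [interior_Icc]
      exact fun x hx => (hd K x hx).differentiableAt.differentiableWithinAt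
    · rw [interior_Icc]
      intro x hx
      rw [(hd K x hx).deriv]
      have := (abs_le.1 (key x hx)).1
      apply mul_nonneg _ (Real.exp_pos _).le
      linarith
  have hanti : AntitoneOn (fun y => (u y ^ 2 + w y ^ 2) * Real.exp (-K * y)) (Icc 0 T) := by
    apply antitoneOn_of_deriv_nonpos (convex_Icc 0 T) (hc (-K))
    · rw [interior_Icc]
      exact fun x hx => (hd (-K) x hx).differentiableAt.differentiableWithinAt
    · rw [interior_Icc]
      intro x hx
      rw [(hd (-K) x hx).deriv]
      have := (abs_le.1 (key x hx)).2
      apply mul_nonpos_of_nonpos_of_nonneg _ (Real.exp_pos _).le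
      linarith
  intro x hx
  have hle : ∃ s : ℝ, (u x ^ 2 + w x ^ 2) * Real.exp (s * x) ≤ 0 := by
    rcases le_total x x₀ with h | h
    · refine ⟨K, ?_⟩
      have := hmono hx hx₀ h
      simpa [h0, h0'] using this
    · refine ⟨-K, ?_⟩
      have := hanti hx₀ hx h
      simpa [h0, h0'] using this
  obtain ⟨s, hs⟩ := hle
  have h1 : u x ^ 2 + w x ^ 2 ≤ 0 := by
    by_contra hcon
    push Not at hcon
    have := mul_pos hcon (Real.exp_pos (s * x))
    linarith
  nlinarith [sq_nonneg (u x), sq_nonneg (w x)]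

/-- C¹ primitive of a function continuous on an interval. -/
lemma aux_prim {h : ℝ → ℝ} {T : ℝ} (hT : 0 ≤ T) (hh : ContinuousOn h (Icc 0 T)) (c : ℝ) :
    ∃ F H : ℝ → ℝ, Continuous H ∧ F 0 = c ∧ (∀ x, HasDerivAt F (H x) x) ∧
      ∀ x ∈ Icc 0 T, H x = h x := by
  refine ⟨fun x => c + ∫ t in (0:ℝ)..x, IccExtend hT ((Icc 0 T).domRestrict h) t,
    IccExtend hT ((Icc 0 T).domRestrict h), ?_, by simp, ?_, ?_⟩
  · exact (continuousOn_iff_continuous_domRestrict.1 hh).Icc_extend'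
  · intro x
    have hcont : Continuous (IccExtend hT ((Icc 0 T).domRestrict h)) :=
      (continuousOn_iff_continuous_domRestrict.1 hh).Icc_extend'
    exact (hcont.integral_hasStrictDerivAt 0 x).hasDerivAt.const_add c
  · intro x hx
    rw [IccExtend_of_mem _ _ hx]; rfl

lemma aux_const {F : ℝ → ℝ} {T : ℝ} (hF : ContinuousOn F (Icc 0 T))
    (hF' : ∀ x ∈ Ioo 0 T, HasDerivAt F 0 x) : ∀ x ∈ Icc 0 T, F x = F 0 := by
  intro x hx
  have := intervalIntegral.integral_eq_sub_of_hasDerivAt_of_le hx.1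
    (hF.mono (Icc_subset_Icc_right hx.2)) (fun y hy => hF' y ⟨hy.1, hy.2.trans_le hx.2⟩)
    (by simp)
  simp at this
  linarith

lemma aux_ext {u w h : ℝ → ℝ} {T : ℝ} (hT : 0 ≤ T) (hh : ContinuousOn h (Icc 0 T))
    (hu : ∀ x ∈ Icc 0 T, HasDerivAt u (w x) x) (hw : ∀ x ∈ Icc 0 T, HasDerivAt w (h x) x) :
    ∃ U : ℝ → ℝ, ContDiff ℝ 2 U ∧ ∀ x ∈ Icc 0 T, U x = u x ∧ deriv U x = w x := by
  obtain ⟨W, H, hH, hW0, hW, hHh⟩ := aux_prim hT hh (w 0)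
  have hWc : Continuous W := continuous_iff_continuousAt.2 fun x => (hW x).continuousAt
  have hWw : ∀ x ∈ Icc 0 T, W x = w x := by
    intro x hx
    have := aux_const (F := fun y => W y - w y) (T := T)
      (fun y hy => ((hW y).continuousAt.sub (hw y hy).continuousAt).continuousWithinAt)
      (fun y hy => by
        have := (hW y).sub (hw y (Ioo_subset_Icc_self hy))
        rw [hHh y (Ioo_subset_Icc_self hy), sub_self] at this
        exact this) x hx
    simp only [hW0, sub_self] at this
    linarith
  have hU2 : ∀ x, HasDerivAt (fun x => u 0 + ∫ t in (0:ℝ)..x, W t) (W x) x := fun x =>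
    (hWc.integral_hasStrictDerivAt 0 x).hasDerivAt.const_add (u 0)
  have hder : deriv (fun x => u 0 + ∫ t in (0:ℝ)..x, W t) = W := funext fun x => (hU2 x).deriv
  have hderW : deriv W = H := funext fun x => (hW x).deriv
  refine ⟨fun x => u 0 + ∫ t in (0:ℝ)..x, W t, ?_, ?_⟩
  · have h1 : ContDiff ℝ 1 W := by
      rw [contDiff_one_iff_deriv, hderW]
      exact ⟨fun x => (hW x).differentiableAt, hH⟩
    rw [← one_add_one_eq_two, contDiff_succ_iff_deriv, hder]
    exact ⟨fun x => (hU2 x).differentiableAt, by simp, h1⟩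
  · intro x hx
    rw [hder]
    refine ⟨?_, hWw x hx⟩
    have := aux_const (F := fun y => (u 0 + ∫ t in (0:ℝ)..y, W t) - u y) (T := T)
      (fun y hy => ((hU2 y).continuousAt.sub (hu y hy).continuousAt).continuousWithinAt)
      (fun y hy => by
        have := (hU2 y).sub (hu y (Ioo_subset_Icc_self hy))
        rw [hWw y (Ioo_subset_Icc_self hy), sub_self] at this
        exact this) x hx
    simp only [intervalIntegral.integral_same, add_zero, sub_self] at this
    linarith

/-- Existence for the inhomogeneous system, given a nontrivial homogeneous solution. -/
lemma aux_exist {φ P g m f : ℝ → ℝ} {T : ℝ} (hT : 0 ≤ T)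
    (hg : ContinuousOn g (Icc 0 T)) (hm : ContinuousOn m (Icc 0 T))
    (hf : ContinuousOn f (Icc 0 T))
    (hφ : ∀ x ∈ Icc 0 T, HasDerivAt φ (g x * P x) x)
    (hP : ∀ x ∈ Icc 0 T, HasDerivAt P (m x * φ x) x)
    (hR : ∀ x ∈ Icc 0 T, φ x ^ 2 + P x ^ 2 ≠ 0)
    (h0 : φ 0 = 0) (h1 : φ T = 0) (hint : ∫ x in (0:ℝ)..T, φ x * f x = 0) :
    ∃ u w : ℝ → ℝ, u 0 = 0 ∧ u T = 0 ∧
      (∀ x ∈ Icc 0 T, HasDerivAt u (g x * w x) x) ∧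
      (∀ x ∈ Icc 0 T, HasDerivAt w (m x * u x - f x) x) := by
  have hφc : ContinuousOn φ (Icc 0 T) := fun y hy => (hφ y hy).continuousAt.continuousWithinAt
  have hPc : ContinuousOn P (Icc 0 T) := fun y hy => (hP y hy).continuousAt.continuousWithinAt
  obtain ⟨b, B, hBc, hb0, hb, hBf⟩ := aux_prim (h := fun x => - (φ x * f x)) hT (hφc.mul hf).neg 0
  have hbT : b T = 0 := by
    have h2 : ∫ x in (0:ℝ)..T, B x = b T - b 0 :=
      intervalIntegral.integral_eq_sub_of_hasDerivAt (fun x _ => hb x) (hBc.intervalIntegrable _ _)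
    have h3 : ∫ x in (0:ℝ)..T, B x = ∫ x in (0:ℝ)..T, - (φ x * f x) := by
      apply intervalIntegral.integral_congr
      intro x hx
      rw [uIcc_of_le hT] at hx
      exact hBf x hx
    rw [intervalIntegral.integral_neg, hint] at h3
    linarith
  have hbc : ContinuousOn b (Icc 0 T) := fun y hy => (hb y).continuousAt.continuousWithinAt
  obtain ⟨a, A, hAc, ha0, ha, hAf⟩ := aux_prim
    (h := fun x => (m x + g x) * (φ x ^ 2 - P x ^ 2) * b x / (φ x ^ 2 + P x ^ 2) ^ 2
      - P x * f x / (φ x ^ 2 + P x ^ 2)) hT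
    (((((hm.add hg).mul ((hφc.pow 2).sub (hPc.pow 2))).mul hbc).div
      (((hφc.pow 2).add (hPc.pow 2)).pow 2) (fun x hx => pow_ne_zero 2 (hR x hx))).sub
      ((hPc.mul hf).div ((hφc.pow 2).add (hPc.pow 2)) hR)) 0
  have hRd : ∀ x ∈ Icc 0 T, HasDerivAt (fun y => φ y ^ 2 + P y ^ 2)
      (2 * (g x + m x) * (φ x * P x)) x := by
    intro x hx
    refine (((hφ x hx).pow 2).add ((hP x hx).pow 2)).congr_deriv ?_
    simp
    ring
  refine ⟨fun x => a x * φ x - b x * P x / (φ x ^ 2 + P x ^ 2),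
    fun x => a x * P x + b x * φ x / (φ x ^ 2 + P x ^ 2), ?_, ?_, ?_, ?_⟩
  · simp [h0, hb0]
  · simp [h1, hbT]
  · intro x hx
    refine (((ha x).mul (hφ x hx)).sub (((hb x).mul (hP x hx)).div (hRd x hx) (hR x hx))).congr_deriv ?_
    rw [hAf x hx, hBf x hx]
    have := hR x hx
    simp only [Pi.mul_apply]
    field_simp
    ring
  · intro x hx
    refine (((ha x).mul (hP x hx)).add (((hb x).mul (hφ x hx)).div (hRd x hx) (hR x hx))).congr_deriv ?_
    rw [hAf x hx, hBf x hx]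
    have := hR x hx
    simp only [Pi.mul_apply]
    field_simp
    ring

lemma aux_g {γ u : ℝ → ℝ} (hγpos : ∀ x ∈ Icc (0:ℝ) Real.pi, 0 < γ x) (hu : ContDiff ℝ 2 u)
    {x : ℝ} (hx : x ∈ Icc (0:ℝ) Real.pi) :
    HasDerivAt u ((γ x)⁻¹ * (γ x * deriv u x)) x := by
  have h1 := (hu.differentiable (by norm_num) x).hasDerivAt
  rwa [inv_mul_cancel_left₀ (hγpos x hx).ne']

lemma aux_R {γ γ₀ φ : ℝ → ℝ} {lam : ℝ}
    (hγ : ContDiff ℝ 1 γ) (hγpos : ∀ x ∈ Icc (0:ℝ) Real.pi, 0 < γ x)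
    (hγ₀ : ContinuousOn γ₀ (Icc 0 Real.pi)) (hφ : IsDirichletEF γ γ₀ lam φ) :
    ∀ x ∈ Icc (0:ℝ) Real.pi, φ x ^ 2 + (γ x * deriv φ x) ^ 2 ≠ 0 := by
  intro x hx hcon
  obtain ⟨hφ2, ⟨y, hy, hyn⟩, hode, hφ0, hφπ⟩ := hφ
  have h1 : φ x = 0 := by nlinarith [sq_nonneg (φ x), sq_nonneg (γ x * deriv φ x)]
  have h2 : γ x * deriv φ x = 0 := by nlinarith [sq_nonneg (φ x), sq_nonneg (γ x * deriv φ x)]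
  refine hyn (aux_uniq (u := φ) (w := fun y => γ y * deriv φ y) (g := fun y => (γ y)⁻¹)
    (m := fun y => γ₀ y - lam) (hγ.continuous.continuousOn.inv₀ fun z hz => (hγpos z hz).ne')
    (hγ₀.sub continuousOn_const) hφ2.continuous.continuousOn
    (hγ.continuous.mul (aux_deriv_cont hφ2).continuous).continuousOn
    (fun z hz => aux_g hγpos hφ2 (Ioo_subset_Icc_self hz))
    (fun z hz => ?_) hx h1 h2 y hy)
  refine (aux_P_deriv (γ₀ := γ₀) hγ hφ2 z).congr_deriv ?_
  rw [hode z (Ioo_subset_Icc_self hz)]; ring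

lemma aux_hom {γ γ₀ φ v : ℝ → ℝ} {lam : ℝ}
    (hγ : ContDiff ℝ 1 γ) (hγpos : ∀ x ∈ Icc (0:ℝ) Real.pi, 0 < γ x)
    (hγ₀ : ContinuousOn γ₀ (Icc 0 Real.pi)) (hφ : IsDirichletEF γ γ₀ lam φ)
    (hv : ContDiff ℝ 2 v) (hv0 : v 0 = 0)
    (hvode : ∀ x ∈ Ioo (0:ℝ) Real.pi, SL γ γ₀ v x = lam * v x) :
    ∃ c : ℝ, ∀ x ∈ Icc (0:ℝ) Real.pi, v x = c * φ x := by
  have hR := aux_R hγ hγpos hγ₀ hφ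
  obtain ⟨hφ2, -, hode, hφ0, hφπ⟩ := hφ
  have h0 : (0:ℝ) ∈ Icc (0:ℝ) Real.pi := ⟨le_rfl, Real.pi_pos.le⟩
  have hP0 : γ 0 * deriv φ 0 ≠ 0 := by
    have := hR 0 h0
    intro h
    simp [hφ0, h] at this
  set c := (γ 0 * deriv v 0) / (γ 0 * deriv φ 0) with hc
  refine ⟨c, fun x hx => ?_⟩
  have := aux_uniq (u := fun y => v y - c * φ y)
    (w := fun y => γ y * deriv v y - c * (γ y * deriv φ y)) (g := fun y => (γ y)⁻¹)
    (m := fun y => γ₀ y - lam) (hγ.continuous.continuousOn.inv₀ fun z hz => (hγpos z hz).ne')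
    (hγ₀.sub continuousOn_const)
    (hv.continuous.sub (continuous_const.mul hφ2.continuous)).continuousOn
    ((hγ.continuous.mul (aux_deriv_cont hv).continuous).sub
      (continuous_const.mul (hγ.continuous.mul (aux_deriv_cont hφ2).continuous))).continuousOn
    (fun z hz => ((aux_g hγpos hv (Ioo_subset_Icc_self hz)).sub
      ((aux_g hγpos hφ2 (Ioo_subset_Icc_self hz)).const_mul c)).congr_deriv (by ring))
    (fun z hz => ((aux_P_deriv (γ₀ := γ₀) hγ hv z).sub
      ((aux_P_deriv (γ₀ := γ₀) hγ hφ2 z).const_mul c)).congr_deriv (by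
        rw [hode z (Ioo_subset_Icc_self hz), hvode z hz]; ring))
    h0 (by simp [hv0, hφ0]) (by rw [hc, div_mul_cancel₀ _ hP0, sub_self]) x hx
  linarith

/-- The integral identity for the right-hand side. -/
lemma aux_int_s8 {p q φ : ℝ → ℝ} (hp : ContDiff ℝ 1 p) (hq : ContinuousOn q (Icc 0 Real.pi))
    (hφ : ContDiff ℝ 2 φ) (h0 : φ 0 = 0) (hπ : φ Real.pi = 0) :
    ∫ x in (0:ℝ)..Real.pi, φ x * (deriv (fun y => p y * φ y) x - q x * φ x) =
      - ∫ x in (0:ℝ)..Real.pi, (q x - (1/2) * deriv p x) * (φ x) ^ 2 := by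
  have hp' : Continuous (deriv p) := (contDiff_one_iff_deriv.1 hp).2
  have hφ' : Continuous (deriv φ) := (aux_deriv_cont hφ).continuous
  have hpd : ∀ x, HasDerivAt p (deriv p x) x := fun x =>
    (hp.differentiable (by norm_num) x).hasDerivAt
  have hφd : ∀ x, HasDerivAt φ (deriv φ x) x := fun x =>
    (hφ.differentiable (by norm_num) x).hasDerivAt
  have hd : ∀ x, deriv (fun y => p y * φ y) x = deriv p x * φ x + p x * deriv φ x := fun x =>
    ((hpd x).mul (hφd x)).deriv
  have hpc := hp.continuous
  have hφc := hφ.continuous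
  have e1 : ∫ x in (0:ℝ)..Real.pi, ((1/2) * deriv p x * φ x ^ 2 + p x * (φ x * deriv φ x)) = 0 := by
    have := intervalIntegral.integral_eq_sub_of_hasDerivAt (a := 0) (b := Real.pi)
      (f := fun x => (1/2) * (p x * φ x ^ 2))
      (f' := fun x => (1/2) * deriv p x * φ x ^ 2 + p x * (φ x * deriv φ x))
      (fun x _ => (((hpd x).mul ((hφd x).pow 2)).const_mul (1/2)).congr_deriv (by simp; ring))
      (by apply Continuous.intervalIntegrable; fun_prop)
    rw [this]; simp [h0, hπ]
  have i2 : IntervalIntegrable (fun x => (q x - (1/2) * deriv p x) * (φ x) ^ 2)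
      MeasureTheory.volume 0 Real.pi := by
    apply ContinuousOn.intervalIntegrable
    rw [uIcc_of_le Real.pi_pos.le]
    exact (hq.sub (continuous_const.mul hp').continuousOn).mul (hφc.pow 2).continuousOn
  have i1 : IntervalIntegrable
      (fun x => (1/2) * deriv p x * φ x ^ 2 + p x * (φ x * deriv φ x))
      MeasureTheory.volume 0 Real.pi := by
    apply Continuous.intervalIntegrable; fun_prop
  have e2 := intervalIntegral.integral_sub i1 i2
  rw [e1, zero_sub] at e2
  rw [← e2]
  congr 1
  funext x
  rw [hd]; ring

lemma aux_ne {γ γ₀ p q φ v₁ v₂ : ℝ → ℝ} {lam c : ℝ}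
    (hγ : ContDiff ℝ 1 γ) (hp : ContDiff ℝ 1 p) (hq : ContinuousOn q (Icc 0 Real.pi))
    (hφ : IsDirichletEF γ γ₀ lam φ) (hv : MemV γ γ₀ p q lam v₁ v₂)
    (hc : ∀ x ∈ Icc (0:ℝ) Real.pi, v₂ x = c * φ x) :
    (∀ x ∈ Ioo (0:ℝ) Real.pi, SL γ γ₀ v₁ x =
      lam * v₁ x + c * (deriv (fun y => p y * φ y) x - q x * φ x)) ∧
    c * ∫ x in (0:ℝ)..Real.pi, (q x - (1/2) * deriv p x) * (φ x) ^ 2 = 0 := by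
  obtain ⟨hφ2, -, hode, hφ0, hφπ⟩ := hφ
  obtain ⟨hv1, hv2, h10, h1π, h20, h2π, hE1, hE2⟩ := hv
  have hE : ∀ x ∈ Ioo (0:ℝ) Real.pi, SL γ γ₀ v₁ x =
      lam * v₁ x + c * (deriv (fun y => p y * φ y) x - q x * φ x) := by
    intro x hx
    have h1 := hE1 x hx
    have h2 : deriv (fun y => p y * v₂ y) x = deriv (fun y => c * (p y * φ y)) x := by
      apply Filter.EventuallyEq.deriv_eq
      filter_upwards [Ioo_mem_nhds hx.1 hx.2] with y hy
      rw [hc y (Ioo_subset_Icc_self hy)]; ring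
    rw [deriv_const_mul_field] at h2
    rw [h2, hc x (Ioo_subset_Icc_self hx)] at h1
    linarith
  refine ⟨hE, ?_⟩
  have hφc := hφ2.continuous
  have hpφ : ContDiff ℝ 1 (fun y => p y * φ y) := hp.mul (hφ2.of_le (by norm_num))
  have hpφ' := (contDiff_one_iff_deriv.1 hpφ).2
  have hφ'c := (aux_deriv_cont hφ2).continuous
  have hv'c := (aux_deriv_cont hv1).continuous
  have hv1c := hv1.continuous
  have hγc := hγ.continuous
  have key := intervalIntegral.integral_eq_sub_of_hasDerivAt_of_le Real.pi_pos.le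
    (f := fun x => φ x * (γ x * deriv v₁ x) - (γ x * deriv φ x) * v₁ x)
    (f' := fun x => -c * (φ x * (deriv (fun y => p y * φ y) x - q x * φ x)))
    (by fun_prop)
    (fun x hx => by
      have hφd := (hφ2.differentiable (by norm_num) x).hasDerivAt
      have hvd := (hv1.differentiable (by norm_num) x).hasDerivAt
      refine ((hφd.mul (aux_P_deriv (γ₀ := γ₀) hγ hv1 x)).sub
        ((aux_P_deriv (γ₀ := γ₀) hγ hφ2 x).mul hvd)).congr_deriv ?_
      rw [hE x hx, hode x (Ioo_subset_Icc_self hx)]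
      ring)
    (by
      apply ContinuousOn.intervalIntegrable
      rw [uIcc_of_le Real.pi_pos.le]
      exact continuousOn_const.mul (hφc.continuousOn.mul
        (hpφ'.continuousOn.sub (hq.mul hφc.continuousOn))))
  rw [intervalIntegral.integral_const_mul, aux_int_s8 hp hq hφ2 hφ0 hφπ] at key
  simp only [hφ0, hφπ, h10, h1π] at key
  linarith

lemma aux_z {γ γ₀ p q φ : ℝ → ℝ} {lam : ℝ}
    (hγ : ContDiff ℝ 1 γ) (hγpos : ∀ x ∈ Icc (0:ℝ) Real.pi, 0 < γ x)
    (hγ₀ : ContinuousOn γ₀ (Icc 0 Real.pi))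
    (hp : ContDiff ℝ 1 p) (hq : ContinuousOn q (Icc 0 Real.pi))
    (hφ : IsDirichletEF γ γ₀ lam φ)
    (hI : ∫ x in (0:ℝ)..Real.pi, (q x - (1/2) * deriv p x) * (φ x) ^ 2 = 0) :
    ∃ U : ℝ → ℝ, MemV γ γ₀ p q lam U φ := by
  have hR := aux_R hγ hγpos hγ₀ hφ
  obtain ⟨hφ2, -, hode, hφ0, hφπ⟩ := hφ
  have hφc := hφ2.continuous
  have hpφ : ContDiff ℝ 1 (fun y => p y * φ y) := hp.mul (hφ2.of_le (by norm_num))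
  have hpφ' := (contDiff_one_iff_deriv.1 hpφ).2
  have hγ' := (contDiff_one_iff_deriv.1 hγ).2
  have hginv : ContinuousOn (fun y => (γ y)⁻¹) (Icc 0 Real.pi) :=
    hγ.continuous.continuousOn.inv₀ fun z hz => (hγpos z hz).ne'
  have hm : ContinuousOn (fun y => γ₀ y - lam) (Icc 0 Real.pi) := hγ₀.sub continuousOn_const
  have hf : ContinuousOn (fun x => deriv (fun y => p y * φ y) x - q x * φ x) (Icc 0 Real.pi) :=
    hpφ'.continuousOn.sub (hq.mul hφc.continuousOn)
  obtain ⟨u, w, hu0, huπ, hu, hw⟩ := aux_exist (φ := φ) (P := fun y => γ y * deriv φ y)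
    Real.pi_pos.le hginv hm hf (fun x hx => aux_g hγpos hφ2 hx)
    (fun x hx => (aux_P_deriv (γ₀ := γ₀) hγ hφ2 x).congr_deriv (by rw [hode x hx]; ring))
    hR hφ0 hφπ (by rw [aux_int_s8 hp hq hφ2 hφ0 hφπ, hI, neg_zero])
  have huc : ContinuousOn u (Icc 0 Real.pi) := fun y hy => (hu y hy).continuousAt.continuousWithinAt
  have hwc : ContinuousOn w (Icc 0 Real.pi) := fun y hy => (hw y hy).continuousAt.continuousWithinAt
  obtain ⟨U, hU2, hU⟩ := aux_ext (u := u) (w := fun x => (γ x)⁻¹ * w x)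
    (h := fun x => (-deriv γ x / γ x ^ 2) * w x + (γ x)⁻¹ * ((γ₀ x - lam) * u x -
      (deriv (fun y => p y * φ y) x - q x * φ x))) Real.pi_pos.le
    (((hγ'.continuousOn.neg.div (hγ.continuous.continuousOn.pow 2)
      (fun z hz => pow_ne_zero 2 (hγpos z hz).ne')).mul hwc).add
      (hginv.mul ((hm.mul huc).sub hf)))
    hu (fun x hx => ((hγ.differentiable (by norm_num) x).hasDerivAt.inv (hγpos x hx).ne').mul
      (hw x hx))
  have h0 : (0:ℝ) ∈ Icc (0:ℝ) Real.pi := ⟨le_rfl, Real.pi_pos.le⟩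
  have hπ : Real.pi ∈ Icc (0:ℝ) Real.pi := ⟨Real.pi_pos.le, le_rfl⟩
  refine ⟨U, hU2, hφ2, by rw [(hU 0 h0).1, hu0], by rw [(hU _ hπ).1, huπ], hφ0, hφπ, ?_,
    fun x hx => hode x (Ioo_subset_Icc_self hx)⟩
  intro x hx
  have hx' := Ioo_subset_Icc_self hx
  have h1 : deriv (fun y => γ y * deriv U y) x = deriv w x := by
    apply Filter.EventuallyEq.deriv_eq
    filter_upwards [Ioo_mem_nhds hx.1 hx.2] with y hy
    rw [(hU y (Ioo_subset_Icc_self hy)).2,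
      mul_inv_cancel_left₀ (hγpos y (Ioo_subset_Icc_self hy)).ne']
  simp only [SL]
  rw [h1, (hw x hx').deriv, (hU x hx').1]
  ring

lemma aux_w {γ γ₀ p q φ : ℝ → ℝ} {lam : ℝ} (hφ : IsDirichletEF γ γ₀ lam φ) :
    MemV γ γ₀ p q lam φ (fun _ => 0) := by
  obtain ⟨hφ2, -, hode, hφ0, hφπ⟩ := hφ
  refine ⟨hφ2, contDiff_const, hφ0, hφπ, rfl, rfl, fun x hx => ?_, fun x hx => ?_⟩
  · simp [hode x (Ioo_subset_Icc_self hx)]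
  · simp [SL]

end

theorem stmt8 (γ γ₀ : ℝ → ℝ)
    (hγ : ContDiff ℝ 1 γ) (hγpos : ∀ x ∈ Set.Icc (0:ℝ) Real.pi, 0 < γ x)
    (hγ₀ : ContinuousOn γ₀ (Set.Icc 0 Real.pi))
    (p q : ℝ → ℝ) (hp : ContDiff ℝ 1 p) (hq : ContinuousOn q (Set.Icc 0 Real.pi))
    (lam : ℝ) (φ : ℝ → ℝ) (hφ : IsDirichletEF γ γ₀ lam φ)
    (hnorm : ∫ x in (0:ℝ)..Real.pi, (φ x) ^ 2 = 1)
    (I : ℝ) (hI : I = ∫ x in (0:ℝ)..Real.pi, (q x - (1/2) * deriv p x) * (φ x) ^ 2) :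
    -- `dim V = 1` when `I ≠ 0`:
    (I ≠ 0 → ∃ w₁ w₂ : ℝ → ℝ, MemV γ γ₀ p q lam w₁ w₂ ∧
        (∃ x ∈ Set.Icc (0:ℝ) Real.pi, w₁ x ≠ 0 ∨ w₂ x ≠ 0) ∧
        ∀ v₁ v₂ : ℝ → ℝ, MemV γ γ₀ p q lam v₁ v₂ →
          ∃ c : ℝ, ∀ x ∈ Set.Icc (0:ℝ) Real.pi,
            v₁ x = c * w₁ x ∧ v₂ x = c * w₂ x) ∧
    -- `dim V = 2` when `I = 0`:
    (I = 0 → ∃ w₁ w₂ z₁ z₂ : ℝ → ℝ,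
        MemV γ γ₀ p q lam w₁ w₂ ∧ MemV γ γ₀ p q lam z₁ z₂ ∧
        (∀ c d : ℝ,
          (∀ x ∈ Set.Icc (0:ℝ) Real.pi,
            c * w₁ x + d * z₁ x = 0 ∧ c * w₂ x + d * z₂ x = 0) → c = 0 ∧ d = 0) ∧
        ∀ v₁ v₂ : ℝ → ℝ, MemV γ γ₀ p q lam v₁ v₂ →
          ∃ c d : ℝ, ∀ x ∈ Set.Icc (0:ℝ) Real.pi,
            v₁ x = c * w₁ x + d * z₁ x ∧ v₂ x = c * w₂ x + d * z₂ x) := by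
  
  have hφ' := hφ
  obtain ⟨hφ2, ⟨y, hy, hyn⟩, hode, hφ0, hφπ⟩ := hφ
  constructor
  · intro hne
    refine ⟨φ, fun _ => 0, aux_w hφ', ⟨y, hy, Or.inl hyn⟩, ?_⟩
    intro v₁ v₂ hv
    obtain ⟨c, hc⟩ := aux_hom hγ hγpos hγ₀ hφ' hv.2.1 hv.2.2.2.2.1 hv.2.2.2.2.2.2.2
    obtain ⟨hE, hcI⟩ := aux_ne hγ hp hq hφ' hv hc
    have hc0 : c = 0 := by
      rw [← hI] at hcI
      exact (mul_eq_zero.1 hcI).resolve_right hne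
    subst hc0
    obtain ⟨d, hd⟩ := aux_hom hγ hγpos hγ₀ hφ' hv.1 hv.2.2.1
      (fun x hx => by rw [hE x hx]; ring)
    exact ⟨d, fun x hx => ⟨hd x hx, by rw [hc x hx]; ring⟩⟩
  · intro h0
    rw [h0] at hI
    obtain ⟨U, hU⟩ := aux_z hγ hγpos hγ₀ hp hq hφ' hI.symm
    refine ⟨φ, fun _ => 0, U, φ, aux_w hφ', hU, ?_, ?_⟩
    · intro c d h
      obtain ⟨h1, h2⟩ := h y hy
      have hd : d = 0 := by
        simp only [mul_zero, zero_add] at h2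
        exact (mul_eq_zero.1 h2).resolve_right hyn
      subst hd
      simp only [zero_mul, add_zero] at h1
      exact ⟨(mul_eq_zero.1 h1).resolve_right hyn, rfl⟩
    · intro v₁ v₂ hv
      obtain ⟨d, hd⟩ := aux_hom hγ hγpos hγ₀ hφ' hv.2.1 hv.2.2.2.2.1 hv.2.2.2.2.2.2.2
      obtain ⟨hE, -⟩ := aux_ne hγ hp hq hφ' hv hd
      obtain ⟨hE', -⟩ := aux_ne (c := 1) hγ hp hq hφ' hU (fun x _ => by ring)
      have hdiff : ContDiff ℝ 2 (fun x => v₁ x - d * U x) :=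
        hv.1.sub (contDiff_const.mul hU.1)
      obtain ⟨c, hc⟩ := aux_hom (v := fun x => v₁ x - d * U x) hγ hγpos hγ₀ hφ' hdiff
        (by simp [hv.2.2.1, hU.2.2.1])
        (fun x hx => by
          have e1 := aux_P_deriv (γ₀ := γ₀) hγ hdiff x
          have e2 := (aux_P_deriv (γ₀ := γ₀) hγ hv.1 x).sub
            ((aux_P_deriv (γ₀ := γ₀) hγ hU.1 x).const_mul d)
          have e3 : (fun z => γ z * deriv (fun x => v₁ x - d * U x) z) =
              ((fun z => γ z * deriv v₁ z) - fun z => d * (γ z * deriv U z)) := by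
            funext z
            have a1 := (hv.1.differentiable (by norm_num) z).hasDerivAt
            have a2 := (hU.1.differentiable (by norm_num) z).hasDerivAt.const_mul d
            have a3 : deriv (fun x => v₁ x - d * U x) z = deriv v₁ z - d * deriv U z :=
              (a1.sub a2).deriv
            simp only [Pi.sub_apply]
            rw [a3]; ring
          rw [e3] at e1
          have := e1.unique e2
          rw [hE x hx, hE' x hx] at this
          linarith)
      refine ⟨c, d, fun x hx => ⟨?_, ?_⟩⟩
      · have := hc x hx
        linarith
      · rw [hd x hx]; ring
end

section
/- Let 0 < a < b < π, λ ∈ ℝ, and let φ be a Dirichlet eigenfunction of 𝔏 for λ. Let p : [a,b] → ℝ be continuously differentiable such that (pφ)' = 0 on (a,b) and p(x₀) = 0 for some x₀ ∈ [a,b]. Then p is identically zero on [a,b]. -/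
theorem aux_zero (γ γ₀ φ : ℝ → ℝ) (lam : ℝ)
    (hγ : ContDiff ℝ 1 γ) (hγpos : ∀ x ∈ Set.Icc (0:ℝ) Real.pi, 0 < γ x)
    (hγ₀ : ContinuousOn γ₀ (Set.Icc 0 Real.pi)) (hφ : ContDiff ℝ 2 φ)
    (hE : ∀ x ∈ Set.Icc (0:ℝ) Real.pi, SL γ γ₀ φ x = lam * φ x)
    (y : ℝ) (hy : y ∈ Set.Ioo 0 Real.pi) (h0 : φ y = 0) (h1 : deriv φ y = 0) :
    ∀ x ∈ Set.Icc (0:ℝ) Real.pi, φ x = 0 := by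
  have hφ' : ContDiff ℝ 1 (deriv φ) := by
    have h2 : ContDiff ℝ (1 + 1) φ := by simpa [one_add_one_eq_two] using hφ
    exact (contDiff_succ_iff_deriv.1 h2).2.2
  have hw : ContDiff ℝ 1 (fun y => γ y * deriv φ y) := hγ.mul hφ'
  have hφd : Differentiable ℝ φ := hφ.differentiable (by norm_num)
  have hwd : Differentiable ℝ (fun y => γ y * deriv φ y) := hw.differentiable (by norm_num)
  obtain ⟨C, hC⟩ := isCompact_Icc.exists_bound_of_continuousOn
    (hγ₀.sub (continuousOn_const (c := lam)))
  obtain ⟨D, hD⟩ := isCompact_Icc.exists_bound_of_continuousOn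
    (hγ.continuous.continuousOn.inv₀ (fun x hx => (hγpos x hx).ne'))
  set K : NNReal := Real.toNNReal (max C D) with hK
  have hKC : C ≤ K := (le_max_left _ _).trans (Real.le_coe_toNNReal _)
  have hKD : D ≤ K := (le_max_right _ _).trans (Real.le_coe_toNNReal _)
  have key := ODE_solution_unique_of_mem_Icc
    (v := fun t (x : ℝ × ℝ) => ((γ t)⁻¹ * x.2, (γ₀ t - lam) * x.1))
    (s := fun _ => Set.univ) (K := K)
    (f := fun t => (φ t, γ t * deriv φ t)) (g := fun _ => (0 : ℝ × ℝ))
    (a := 0) (b := Real.pi) (t₀ := y) ?_ hy ?_ ?_ ?_ ?_ ?_ ?_ ?_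
  · intro x hx
    have := key hx
    simpa using congrArg Prod.fst this
  · intro t ht
    have ht' := Set.Ioo_subset_Icc_self ht
    refine LipschitzWith.lipschitzOnWith (LipschitzWith.of_dist_le_mul ?_)
    intro x z
    have e1 : dist ((γ t)⁻¹ * x.2) ((γ t)⁻¹ * z.2) ≤ K * dist x z := by
      rw [Real.dist_eq, ← mul_sub, abs_mul]
      exact mul_le_mul ((hD t ht').trans hKD) (le_max_right _ _) (abs_nonneg _) K.2
    have e2 : dist ((γ₀ t - lam) * x.1) ((γ₀ t - lam) * z.1) ≤ K * dist x z := by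
      rw [Real.dist_eq, ← mul_sub, abs_mul]
      exact mul_le_mul ((hC t ht').trans hKC) (le_max_left _ _) (abs_nonneg _) K.2
    exact max_le e1 e2
  · exact (hφd.continuous.prodMk hwd.continuous).continuousOn
  · intro t ht
    have ht' := Set.Ioo_subset_Icc_self ht
    have hg := (hγpos t ht').ne'
    have d1 := (hφd t).hasDerivAt
    have d2 := (hwd t).hasDerivAt
    have hEt := hE t ht'
    unfold SL at hEt
    have d3 := d1.prodMk d2
    refine d3.congr_deriv ?_
    refine Prod.ext ?_ ?_
    · simp only; field_simp
    · simp only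
      linarith
  · intro t _; trivial
  · exact continuousOn_const
  · intro t _
    convert hasDerivAt_const t (0 : ℝ × ℝ) using 1
    simp
  · intro t _; trivial
  · simp [h0, h1]

theorem stmt11 (γ γ₀ : ℝ → ℝ)
    (hγ : ContDiff ℝ 1 γ) (hγpos : ∀ x ∈ Set.Icc (0:ℝ) Real.pi, 0 < γ x)
    (hγ₀ : ContinuousOn γ₀ (Set.Icc 0 Real.pi))
    (a b : ℝ) (ha : 0 < a) (hab : a < b) (hb : b < Real.pi)
    (lam : ℝ) (φ : ℝ → ℝ) (hφ : IsDirichletEF γ γ₀ lam φ)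
    (p : ℝ → ℝ) (hp : ContDiff ℝ 1 p)
    (hpφ : ∀ x ∈ Set.Ioo a b, deriv (fun y => p y * φ y) x = 0)
    (x₀ : ℝ) (hx₀ : x₀ ∈ Set.Icc a b) (hpx₀ : p x₀ = 0) :
    ∀ x ∈ Set.Icc a b, p x = 0 := by
  obtain ⟨hφ2, ⟨z, hz, hφz⟩, hE, -, -⟩ := hφ
  have hφd : Differentiable ℝ φ := hφ2.differentiable (by norm_num)
  have hpd : Differentiable ℝ p := hp.differentiable (by norm_num)
  have hprod : Differentiable ℝ (fun y => p y * φ y) := hpd.mul hφd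
  have hconst : ∀ x ∈ Set.Icc a b, p x * φ x = p a * φ a := by
    intro x hx
    rcases hx.1.eq_or_lt with h | h
    · rw [← h]
    obtain ⟨c, hc, hc'⟩ := exists_deriv_eq_slope (fun y => p y * φ y) h
      hprod.continuous.continuousOn hprod.differentiableOn
    rw [hpφ c ⟨hc.1, hc.2.trans_le hx.2⟩] at hc'
    have h3 : x - a ≠ 0 := by linarith
    field_simp at hc'
    linarith
  have hzero : ∀ x ∈ Set.Icc a b, p x * φ x = 0 := by
    intro x hx
    rw [hconst x hx, ← hconst x₀ hx₀, hpx₀, zero_mul]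
  have hopen : ∀ x ∈ Set.Ioo a b, p x = 0 := by
    intro x hx
    by_contra hpx
    have hev : φ =ᶠ[nhds x] fun _ => 0 := by
      filter_upwards [hpd.continuous.continuousAt.eventually_ne hpx,
        isOpen_Ioo.mem_nhds hx] with t ht1 ht2
      exact (mul_eq_zero.1 (hzero t (Set.Ioo_subset_Icc_self ht2))).resolve_left ht1
    refine hφz (aux_zero γ γ₀ φ lam hγ hγpos hγ₀ hφ2 hE x
      ⟨ha.trans hx.1, hx.2.trans hb⟩ hev.eq_of_nhds ?_ z hz)
    rw [hev.deriv_eq]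
    simp
  have hcl : closure (Set.Ioo a b) ⊆ {x | p x = 0} :=
    closure_minimal hopen (isClosed_eq hpd.continuous continuous_const)
  rw [closure_Ioo hab.ne] at hcl
  exact hcl
end

section
/- Let 0 < a < b < π and let p : [a,b] → ℝ be continuously differentiable with p(x) ≠ 0 for all x ∈ [a,b]. Let λ₀, λ₁ ∈ ℝ and let φ₀, φ₁ be Dirichlet eigenfunctions of 𝔏 for λ₀ and λ₁ respectively. If (pφ₀)' = 0 on (a,b) and (pφ₁)' = 0 on (a,b), then λ₀ = λ₁. -/
theorem ef_zero_of_local (γ γ₀ : ℝ → ℝ)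
    (hγ : ContDiff ℝ 1 γ) (hγpos : ∀ x ∈ Set.Icc (0:ℝ) Real.pi, 0 < γ x)
    (hγ₀ : ContinuousOn γ₀ (Set.Icc 0 Real.pi)) (lam : ℝ) (φ : ℝ → ℝ)
    (hφ : IsDirichletEF γ γ₀ lam φ) (m : ℝ) (hm : m ∈ Set.Ioo 0 Real.pi)
    (h0 : φ m = 0) (h1 : deriv φ m = 0) : False := by
  obtain ⟨hc, ⟨x, hx, hxne⟩, hL, -, -⟩ := hφ
  have hd1 : ContDiff ℝ 1 (deriv φ) := by
    have : ContDiff ℝ (1 + 1) φ := by simpa [one_add_one_eq_two] using hc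
    exact (contDiff_succ_iff_deriv.1 this).2.2
  have hv : Differentiable ℝ (fun y => γ y * deriv φ y) :=
    (hγ.differentiable one_ne_zero).mul (hd1.differentiable one_ne_zero)
  have hφd : Differentiable ℝ φ := hc.differentiable two_ne_zero
  obtain ⟨K1, hK1⟩ := isCompact_Icc.exists_bound_of_continuousOn
    (f := fun x => (γ x)⁻¹) (s := Set.Icc (0:ℝ) Real.pi)
    (hγ.continuous.continuousOn.inv₀ (fun x hx => (hγpos x hx).ne'))
  obtain ⟨K2, hK2⟩ := isCompact_Icc.exists_bound_of_continuousOn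
    (f := fun x => γ₀ x - lam) (s := Set.Icc (0:ℝ) Real.pi)
    (hγ₀.sub continuousOn_const)
  let V : ℝ → ℝ × ℝ → ℝ × ℝ := fun t z => ((γ t)⁻¹ * z.2, (γ₀ t - lam) * z.1)
  have hV : ∀ t ∈ Set.Ioo (0:ℝ) Real.pi,
      LipschitzOnWith (Real.toNNReal (max K1 K2)) (V t) Set.univ := by
    intro t ht
    have ht' := Set.Ioo_subset_Icc_self ht
    have k1 := (hK1 t ht').trans (le_max_left K1 K2)
    have k2 := (hK2 t ht').trans (le_max_right K1 K2)
    refine LipschitzOnWith.of_dist_le_mul fun z _ w _ => ?_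
    have hK : 0 ≤ max K1 K2 := (norm_nonneg _).trans k1
    rw [Real.coe_toNNReal _ hK, Prod.dist_eq]
    simp only [V]
    rw [Real.dist_eq, Real.dist_eq, ← mul_sub, ← mul_sub, abs_mul, abs_mul]
    refine max_le ?_ ?_
    · refine mul_le_mul k1 ?_ (abs_nonneg _) hK
      rw [← Real.dist_eq, Prod.dist_eq]; exact le_max_right _ _
    · refine mul_le_mul k2 ?_ (abs_nonneg _) hK
      rw [← Real.dist_eq, Prod.dist_eq]; exact le_max_left _ _
  have key := ODE_solution_unique_of_mem_Icc (v := V) (s := fun _ => Set.univ)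
    (f := fun t => (φ t, γ t * deriv φ t)) (g := fun _ => (0, 0)) hV hm
    (hφd.continuous.prodMk hv.continuous).continuousOn
    (by
      intro t ht
      have ht' := Set.Ioo_subset_Icc_self ht
      have hg := (hγpos t ht').ne'
      refine HasDerivAt.prodMk ?_ ?_
      · have := (hφd t).hasDerivAt
        simpa [hg] using this
      · have := (hv t).hasDerivAt
        have e := hL t ht'
        unfold SL at e
        convert this using 1
        simp only
        linarith)
    (fun _ _ => Set.mem_univ _) continuousOn_const
    (by
      intro t ht
      have e : V t (0, 0) = 0 := by simp [V]
      rw [e]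
      exact hasDerivAt_const t ((0:ℝ), (0:ℝ)))
    (fun _ _ => Set.mem_univ _) (by simp [h0, h1])
  exact hxne (congrArg Prod.fst (key hx))

theorem const_of_deriv (a b : ℝ) (hab : a < b) (p φ : ℝ → ℝ) (hp : Differentiable ℝ p)
    (hφ : Differentiable ℝ φ)
    (h : ∀ x ∈ Set.Ioo a b, deriv (fun y => p y * φ y) x = 0) :
    ∃ c, ∀ x ∈ Set.Ioo a b, p x * φ x = c :=
  isOpen_Ioo.exists_is_const_of_deriv_eq_zero isPreconnected_Ioo
    (f := fun y => p y * φ y) (hp.mul hφ).differentiableOn h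

theorem stmt12 (γ γ₀ : ℝ → ℝ)
    (hγ : ContDiff ℝ 1 γ) (hγpos : ∀ x ∈ Set.Icc (0:ℝ) Real.pi, 0 < γ x)
    (hγ₀ : ContinuousOn γ₀ (Set.Icc 0 Real.pi))
    (a b : ℝ) (ha : 0 < a) (hab : a < b) (hb : b < Real.pi)
    (p : ℝ → ℝ) (hp : ContDiff ℝ 1 p) (hpne : ∀ x ∈ Set.Icc a b, p x ≠ 0)
    (lam₀ lam₁ : ℝ) (φ₀ φ₁ : ℝ → ℝ)
    (hφ₀ : IsDirichletEF γ γ₀ lam₀ φ₀) (hφ₁ : IsDirichletEF γ γ₀ lam₁ φ₁)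
    (h₀ : ∀ x ∈ Set.Ioo a b, deriv (fun y => p y * φ₀ y) x = 0)
    (h₁ : ∀ x ∈ Set.Ioo a b, deriv (fun y => p y * φ₁ y) x = 0) :
    lam₀ = lam₁ := by

  have hpd := hp.differentiable one_ne_zero
  have hd0 := hφ₀.1.differentiable two_ne_zero
  have hd1 := hφ₁.1.differentiable two_ne_zero
  obtain ⟨c0, hc0⟩ := const_of_deriv a b hab p φ₀ hpd hd0 h₀
  obtain ⟨c1, hc1⟩ := const_of_deriv a b hab p φ₁ hpd hd1 h₁
  obtain ⟨m, hm⟩ := Set.nonempty_Ioo.2 hab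
  have hm' : m ∈ Set.Ioo 0 Real.pi := ⟨ha.trans hm.1, hm.2.trans hb⟩
  have hmn : Set.Ioo a b ∈ nhds m := isOpen_Ioo.mem_nhds hm
  have hpm : ∀ x ∈ Set.Ioo a b, p x ≠ 0 := fun x hx => hpne x (Set.Ioo_subset_Icc_self hx)
  have zero : ∀ lam φ, IsDirichletEF γ γ₀ lam φ → ∀ c, (∀ x ∈ Set.Ioo a b, p x * φ x = c) →
      c ≠ 0 := by
    rintro lam φ hφ c hc rfl
    have hz : φ =ᶠ[nhds m] fun _ => 0 := by
      filter_upwards [hmn] with x hx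
      exact (mul_eq_zero.1 (hc x hx)).resolve_left (hpm x hx)
    exact ef_zero_of_local γ γ₀ hγ hγpos hγ₀ lam φ hφ m hm' hz.eq_of_nhds
      (by rw [hz.deriv_eq]; simp)
  have n0 := zero _ _ hφ₀ c0 hc0
  have n1 := zero _ _ hφ₁ c1 hc1
  have hk : φ₁ =ᶠ[nhds m] fun x => (c1 / c0) * φ₀ x := by
    filter_upwards [hmn] with x hx
    have e0 := hc0 x hx
    have e1 := hc1 x hx
    apply mul_left_cancel₀ (hpm x hx)
    rw [e1, mul_left_comm, e0]
    field_simp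
  have hkd : (fun y => γ y * deriv φ₁ y) =ᶠ[nhds m]
      fun y => (c1 / c0) * (γ y * deriv φ₀ y) := by
    filter_upwards [hk.deriv] with x hx
    rw [hx, deriv_const_mul_field]
    ring
  have e0 := hφ₀.2.2.1 m (Set.Ioo_subset_Icc_self hm')
  have e1 := hφ₁.2.2.1 m (Set.Ioo_subset_Icc_self hm')
  unfold SL at e0 e1
  rw [hkd.deriv_eq, deriv_const_mul_field, hk.eq_of_nhds] at e1
  have hf : φ₀ m ≠ 0 := by
    intro h
    apply n0
    rw [← hc0 m hm, h, mul_zero]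
  have hkne : c1 / c0 ≠ 0 := div_ne_zero n1 n0
  have : (c1 / c0 * φ₀ m) * lam₀ = (c1 / c0 * φ₀ m) * lam₁ := by
    linear_combination e1 - (c1 / c0) * e0
  exact mul_left_cancel₀ (mul_ne_zero hkne hf) this
end

section
/- There exists a constant C > 0, depending only on γ and γ₀, with the following property: for every λ ≥ 1, every continuous f : [0,π] → ℝ, and every twice continuously differentiable u : [0,π] → ℝ satisfying 𝔏u = λu + f on [0,π], if one defines U(x) := (u(x), √(γ(x)/λ)·u'(x)) ∈ ℝ², then for all x, y ∈ [0,π]: ‖U(x)‖ ≤ C·( ‖U(y)‖ + | ∫_y^x |f(s)|/√(γ(s)λ) ds | ), where ‖·‖ is the Euclidean norm on ℝ². -/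
theorem gron_fwd (a b k : ℝ) (hab : a ≤ b) (hk : 0 ≤ k) (E E' g : ℝ → ℝ)
    (hE : ∀ t ∈ Set.Icc a b, HasDerivAt E (E' t) t) (hE0 : ∀ t ∈ Set.Icc a b, 0 ≤ E t)
    (hg : ContinuousOn g (Set.Icc a b)) (hg0 : ∀ t ∈ Set.Icc a b, 0 ≤ g t)
    (hb : ∀ t ∈ Set.Icc a b, E' t ≤ 2 * k * E t + 2 * g t * Real.sqrt (E t)) :
    Real.sqrt (E b) ≤ Real.exp (k * (b - a)) * (Real.sqrt (E a) + ∫ s in a..b, g s) := by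
  have key : ∀ ε > 0, Real.sqrt (E b + ε) ≤
      Real.exp (k * (b - a)) * (Real.sqrt (E a + ε) + ∫ s in a..b, g s) := by
    intro ε hε
    have hanti : AntitoneOn (fun t => Real.exp (-(k * (t - a))) * Real.sqrt (E t + ε)
        - ∫ s in a..t, g s) (Set.Icc a b) := by
      apply antitoneOn_of_hasDerivWithinAt_nonpos (convex_Icc a b)
        (f' := fun t => (Real.exp (-(k * (t - a))) * (-k)) * Real.sqrt (E t + ε)
          + Real.exp (-(k * (t - a))) * (E' t / (2 * Real.sqrt (E t + ε))) - g t)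
      · apply ContinuousOn.sub
        · apply ContinuousOn.mul (by fun_prop)
          apply Real.continuous_sqrt.comp_continuousOn
          exact ContinuousOn.add (fun t ht => (hE t ht).continuousAt.continuousWithinAt)
            continuousOn_const
        · have := intervalIntegral.continuousOn_primitive_interval (f := g) (a := a) (b := b)
            (μ := MeasureTheory.volume)
            (by rw [Set.uIcc_of_le hab]; exact hg.integrableOn_Icc)
          rwa [Set.uIcc_of_le hab] at this
      · intro t ht
        rw [interior_Icc] at ht
        have htI := Set.Ioo_subset_Icc_self ht
        apply HasDerivAt.hasDerivWithinAt
        apply HasDerivAt.sub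
        · apply HasDerivAt.mul
          · have h1 : HasDerivAt (fun t => -(k * (t - a))) (-k) t := 
              (((hasDerivAt_id t).sub_const a).const_mul k).neg.congr_deriv (by simp)
            exact h1.exp
          · exact ((hE t htI).add_const ε).sqrt (by have := hE0 t htI; positivity)
        · apply intervalIntegral.integral_hasDerivAt_right
          · apply ContinuousOn.intervalIntegrable_of_Icc ht.1.le
            exact hg.mono (Set.Icc_subset_Icc_right ht.2.le)
          · exact (hg.mono Set.Ioo_subset_Icc_self).stronglyMeasurableAtFilter isOpen_Ioo t ht
          · exact hg.continuousAt (Icc_mem_nhds ht.1 ht.2)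
      · intro t ht
        rw [interior_Icc] at ht
        have htI := Set.Ioo_subset_Icc_self ht
        have h0 := hE0 t htI
        have h1 := hg0 t htI
        have h2 := hb t htI
        have hNpos : 0 < Real.sqrt (E t + ε) := Real.sqrt_pos.2 (by positivity)
        have hNsq : Real.sqrt (E t + ε) ^ 2 = E t + ε := Real.sq_sqrt (by positivity)
        have hle : Real.sqrt (E t) ≤ Real.sqrt (E t + ε) := Real.sqrt_le_sqrt (by linarith)
        set N := Real.sqrt (E t + ε)
        have h3 : E' t / (2 * N) ≤ k * N + g t := by
          rw [div_le_iff₀ (by positivity)]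
          have := mul_le_mul_of_nonneg_left hle h1
          have := mul_nonneg hk hε.le
          have : k * N^2 = k * (E t + ε) := by rw [hNsq]
          nlinarith
        have he1 : Real.exp (-(k * (t - a))) ≤ 1 := by
          apply Real.exp_le_one_iff.2
          have := mul_nonneg hk (sub_nonneg.2 ht.1.le)
          linarith
        have he0 := Real.exp_pos (-(k * (t - a)))
        have := mul_le_mul_of_nonneg_left h3 he0.le
        have := mul_le_mul_of_nonneg_right he1 h1
        nlinarith
    have h := hanti (Set.left_mem_Icc.2 hab) (Set.right_mem_Icc.2 hab) hab
    simp only [sub_self, mul_zero, neg_zero, Real.exp_zero, one_mul,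
      intervalIntegral.integral_same, sub_zero] at h
    have h' : Real.exp (-(k * (b - a))) * Real.sqrt (E b + ε) ≤
      Real.sqrt (E a + ε) + ∫ s in a..b, g s := by linarith
    have := mul_le_mul_of_nonneg_left h' (Real.exp_pos (k * (b - a))).le
    rwa [← mul_assoc, ← Real.exp_add, add_neg_cancel, Real.exp_zero, one_mul] at this
  have hl : Filter.Tendsto (fun ε : ℝ => Real.sqrt (E b + ε)) (nhdsWithin 0 (Set.Ioi 0))
      (nhds (Real.sqrt (E b))) := by
    have : Continuous (fun ε : ℝ => Real.sqrt (E b + ε)) := by fun_prop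
    simpa using (this.tendsto 0).mono_left nhdsWithin_le_nhds
  have hr : Filter.Tendsto (fun ε : ℝ => Real.exp (k * (b - a)) *
      (Real.sqrt (E a + ε) + ∫ s in a..b, g s)) (nhdsWithin 0 (Set.Ioi 0))
      (nhds (Real.exp (k * (b - a)) * (Real.sqrt (E a) + ∫ s in a..b, g s))) := by
    have : Continuous (fun ε : ℝ => Real.exp (k * (b - a)) *
      (Real.sqrt (E a + ε) + ∫ s in a..b, g s)) := by fun_prop
    simpa using (this.tendsto 0).mono_left nhdsWithin_le_nhds
  exact le_of_tendsto_of_tendsto hl hr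
    (Filter.eventually_of_mem self_mem_nhdsWithin (fun ε hε => key ε hε))

theorem gron_bwd (a b k : ℝ) (hab : a ≤ b) (hk : 0 ≤ k) (E E' g : ℝ → ℝ)
    (hE : ∀ t ∈ Set.Icc a b, HasDerivAt E (E' t) t) (hE0 : ∀ t ∈ Set.Icc a b, 0 ≤ E t)
    (hg : ContinuousOn g (Set.Icc a b)) (hg0 : ∀ t ∈ Set.Icc a b, 0 ≤ g t)
    (hb : ∀ t ∈ Set.Icc a b, -E' t ≤ 2 * k * E t + 2 * g t * Real.sqrt (E t)) :
    Real.sqrt (E a) ≤ Real.exp (k * (b - a)) * (Real.sqrt (E b) + ∫ s in a..b, g s) := by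
  have hm : ∀ t ∈ Set.Icc a b, a + b - t ∈ Set.Icc a b := by
    intro t ht
    constructor <;> linarith [ht.1, ht.2]
  have h := gron_fwd a b k hab hk (fun t => E (a + b - t)) (fun t => - E' (a + b - t))
    (fun t => g (a + b - t))
    (fun t ht => by
      have := (hE _ (hm t ht)).comp t ((hasDerivAt_id t).const_sub (a + b))
      exact this.congr_deriv (by simp))
    (fun t ht => hE0 _ (hm t ht))
    (hg.comp (by fun_prop) hm)
    (fun t ht => hg0 _ (hm t ht))
    (fun t ht => hb _ (hm t ht))
  simpa [intervalIntegral.integral_comp_sub_left] using h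

theorem alg_bound (G G0 G' L u v F k : ℝ) (hG : 0 < G) (hL : 1 ≤ L)
    (hk : |G0| / Real.sqrt G + |G'| / G ≤ 2 * k) :
    |2 * v * (G0 * u - F) / L - G' * v ^ 2 / L| ≤ 2 * k * (u ^ 2 + G / L * v ^ 2) +
      2 * (|F| / Real.sqrt (G * L)) * Real.sqrt (u ^ 2 + G / L * v ^ 2) := by
  have hL0 : 0 < L := by linarith
  have hsG := Real.sqrt_pos.2 hG
  have hr : 0 < Real.sqrt (G * L) := Real.sqrt_pos.2 (by positivity)
  obtain ⟨q, hq⟩ : ∃ q, q = Real.sqrt (G * L) * v / L := ⟨_, rfl⟩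
  have hr2 : Real.sqrt (G * L) ^ 2 = G * L := Real.sq_sqrt (by positivity)
  have hrs : Real.sqrt G ≤ Real.sqrt (G * L) := Real.sqrt_le_sqrt (by nlinarith)
  generalize Real.sqrt (G * L) = r at *
  have hq2 : G / L * v ^ 2 = q ^ 2 := by
    rw [hq, div_pow, mul_pow, hr2]; field_simp
  have hv : v / L = q / r := by rw [hq]; field_simp
  have e1 : 2 * v * (G0 * u - F) / L - G' * v ^ 2 / L =
      2 * q * u * (G0 / r) - 2 * q * (F / r) - (G' / G) * q ^ 2 := by
    have : 2 * v * (G0 * u - F) / L = 2 * (v / L) * (G0 * u - F) := by ring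
    rw [this, hv, ← hq2]; field_simp
  rw [e1, hq2]
  have hqE : |q| ≤ Real.sqrt (u ^ 2 + q ^ 2) := Real.abs_le_sqrt (by nlinarith [sq_nonneg u])
  have a1 : |2 * q * u * (G0 / r)| ≤ (u ^ 2 + q ^ 2) * (|G0| / Real.sqrt G) := by
    rw [abs_mul, abs_div, abs_of_pos hr]
    apply mul_le_mul _ _ (by positivity) (by positivity)
    · rw [abs_le]; constructor <;> nlinarith [sq_nonneg (u + q), sq_nonneg (u - q)]
    · gcongr
  have a2 : |2 * q * (F / r)| ≤ 2 * (|F| / r) * Real.sqrt (u ^ 2 + q ^ 2) := by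
    rw [abs_mul, abs_div, abs_of_pos hr, abs_mul, abs_two]
    have := mul_le_mul_of_nonneg_left hqE (by positivity : 0 ≤ 2 * (|F| / r))
    linarith
  have a3 : |(G' / G) * q ^ 2| ≤ (|G'| / G) * (u ^ 2 + q ^ 2) := by
    rw [abs_mul, abs_div, abs_of_pos hG, abs_of_nonneg (sq_nonneg q)]
    gcongr
    nlinarith [sq_nonneg u]
  have a4 := mul_le_mul_of_nonneg_right hk (by positivity : 0 ≤ u ^ 2 + q ^ 2)
  have b1 := abs_sub (2 * q * u * (G0 / r) - 2 * q * (F / r)) ((G' / G) * q ^ 2)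
  have b2 := abs_sub (2 * q * u * (G0 / r)) (2 * q * (F / r))
  linarith


/-- The Euclidean norm of the vector `U(x) = (u x, √(γ x / lam) * u' x) ∈ ℝ²`. -/
noncomputable def Unorm (γ : ℝ → ℝ) (lam : ℝ) (u : ℝ → ℝ) (x : ℝ) : ℝ :=
  Real.sqrt ((u x) ^ 2 + (Real.sqrt (γ x / lam) * deriv u x) ^ 2)

theorem stmt13 (γ γ₀ : ℝ → ℝ)
    (hγ : ContDiff ℝ 1 γ) (hγpos : ∀ x ∈ Set.Icc (0:ℝ) Real.pi, 0 < γ x)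
    (hγ₀ : ContinuousOn γ₀ (Set.Icc 0 Real.pi)) :
    ∃ C > (0:ℝ), ∀ lam : ℝ, 1 ≤ lam →
      ∀ f : ℝ → ℝ, ContinuousOn f (Set.Icc 0 Real.pi) →
      ∀ u : ℝ → ℝ, ContDiff ℝ 2 u →
      (∀ x ∈ Set.Icc (0:ℝ) Real.pi, SL γ γ₀ u x = lam * u x + f x) →
      ∀ x ∈ Set.Icc (0:ℝ) Real.pi, ∀ y ∈ Set.Icc (0:ℝ) Real.pi,
        Unorm γ lam u x ≤
          C * (Unorm γ lam u y + |∫ s in y..x, |f s| / Real.sqrt (γ s * lam)|) := by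
  have hgc : ContinuousOn γ (Set.Icc 0 Real.pi) := hγ.continuous.continuousOn
  have hdgc : ContinuousOn (deriv γ) (Set.Icc 0 Real.pi) :=
    (hγ.continuous_deriv le_rfl).continuousOn
  have hKc : ContinuousOn (fun x => |γ₀ x| / Real.sqrt (γ x) + |deriv γ x| / γ x)
      (Set.Icc 0 Real.pi) := by
    apply ContinuousOn.add
    · exact hγ₀.abs.div (Real.continuous_sqrt.comp_continuousOn hgc)
        (fun x hx => (Real.sqrt_pos.2 (hγpos x hx)).ne')
    · exact hdgc.abs.div hgc (fun x hx => (hγpos x hx).ne')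
  obtain ⟨M, hM⟩ := isCompact_Icc.bddAbove_image hKc
  have hM' : ∀ x ∈ Set.Icc (0:ℝ) Real.pi,
      |γ₀ x| / Real.sqrt (γ x) + |deriv γ x| / γ x ≤ 2 * (|M| / 2) := by
    intro x hx
    have := hM (Set.mem_image_of_mem _ hx)
    linarith [le_abs_self M]
  obtain ⟨k, hkdef⟩ : ∃ k, k = |M| / 2 := ⟨_, rfl⟩
  rw [← hkdef] at hM'
  have hk : 0 ≤ k := by rw [hkdef]; positivity
  refine ⟨Real.exp (k * Real.pi), Real.exp_pos _, ?_⟩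
  intro lam hlam f hf u hu hSL x hx y hy
  have hl0 : 0 < lam := by linarith
  have hud : ∀ t, HasDerivAt u (deriv u t) t := fun t =>
    (hu.differentiable (by norm_num) t).hasDerivAt
  have hu1 : ContDiff ℝ 1 (deriv u) :=
    ((contDiff_succ_iff_deriv (n := 1)).1 (by simpa [one_add_one_eq_two] using hu)).2.2
  have hudd : ∀ t, HasDerivAt (deriv u) (deriv (deriv u) t) t := fun t =>
    (hu1.differentiable (by norm_num) t).hasDerivAt
  have hγd : ∀ t, HasDerivAt γ (deriv γ t) t := fun t =>
    (hγ.differentiable (by norm_num) t).hasDerivAt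
  have hU : ∀ t ∈ Set.Icc (0:ℝ) Real.pi,
      Unorm γ lam u t = Real.sqrt (u t ^ 2 + γ t / lam * deriv u t ^ 2) := by
    intro t ht
    have := hγpos t ht
    rw [Unorm, mul_pow, Real.sq_sqrt (by positivity)]
  have hE : ∀ t ∈ Set.Icc (0:ℝ) Real.pi,
      HasDerivAt (fun t => u t ^ 2 + γ t / lam * deriv u t ^ 2)
        (2 * deriv u t * (γ₀ t * u t - f t) / lam - deriv γ t * deriv u t ^ 2 / lam) t := by
    intro t ht
    have h1 := ((hud t).pow 2).add (((hγd t).div_const lam).mul ((hudd t).pow 2))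
    refine h1.congr_deriv ?_
    have h2 := hSL t ht
    have h3 := ((hγd t).mul (hudd t)).deriv
    have h4 : deriv (fun y => γ y * deriv u y) t =
      deriv γ t * deriv u t + γ t * deriv (deriv u) t := h3
    rw [SL, h4] at h2
    have h5 : f t = -(deriv γ t * deriv u t + γ t * deriv (deriv u) t) + γ₀ t * u t
      - lam * u t := by linarith
    rw [h5]
    simp
    field_simp
    ring
  have hE0 : ∀ t ∈ Set.Icc (0:ℝ) Real.pi, 0 ≤ u t ^ 2 + γ t / lam * deriv u t ^ 2 := by
    intro t ht
    have := hγpos t ht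
    positivity
  have hgcont : ContinuousOn (fun s => |f s| / Real.sqrt (γ s * lam)) (Set.Icc 0 Real.pi) := by
    refine hf.abs.div (Real.continuous_sqrt.comp_continuousOn (hgc.mul continuousOn_const)) ?_
    intro t ht
    have := hγpos t ht
    exact (Real.sqrt_pos.2 (by positivity)).ne'
  have hg0 : ∀ t, 0 ≤ |f t| / Real.sqrt (γ t * lam) := fun t => by positivity
  have hB := fun t (ht : t ∈ Set.Icc (0:ℝ) Real.pi) =>
    alg_bound (γ t) (γ₀ t) (deriv γ t) lam (u t) (deriv u t) (f t) k (hγpos t ht) hlam (hM' t ht)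
  rw [hU x hx, hU y hy]
  rcases le_total y x with hyx | hxy
  · have hs : Set.Icc y x ⊆ Set.Icc 0 Real.pi := Set.Icc_subset_Icc hy.1 hx.2
    have h := gron_fwd y x k hyx hk _ _ _ (fun t ht => hE t (hs ht)) (fun t ht => hE0 t (hs ht))
      (hgcont.mono hs) (fun t _ => hg0 t) (fun t ht => (le_abs_self _).trans (hB t (hs ht)))
    refine h.trans ?_
    have : k * (x - y) ≤ k * Real.pi := mul_le_mul_of_nonneg_left (by linarith [hx.2, hy.1]) hk
    refine mul_le_mul (Real.exp_le_exp.2 this) ?_ ?_ (Real.exp_pos _).le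
    · gcongr
      exact le_abs_self _
    · exact add_nonneg (Real.sqrt_nonneg _)
        (intervalIntegral.integral_nonneg hyx (fun t _ => hg0 t))
  · have hs : Set.Icc x y ⊆ Set.Icc 0 Real.pi := Set.Icc_subset_Icc hx.1 hy.2
    have h := gron_bwd x y k hxy hk _ _ _ (fun t ht => hE t (hs ht)) (fun t ht => hE0 t (hs ht))
      (hgcont.mono hs) (fun t _ => hg0 t) (fun t ht => (neg_le_abs _).trans (hB t (hs ht)))
    refine h.trans ?_
    have : k * (y - x) ≤ k * Real.pi := mul_le_mul_of_nonneg_left (by linarith [hy.2, hx.1]) hk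
    refine mul_le_mul (Real.exp_le_exp.2 this) ?_ ?_ (Real.exp_pos _).le
    · rw [intervalIntegral.integral_symm x y, abs_neg]
      gcongr
      exact le_abs_self _
    · exact add_nonneg (Real.sqrt_nonneg _)
        (intervalIntegral.integral_nonneg hxy (fun t _ => hg0 t))
end

section
/- For every nonempty open set ω ⊆ (0,π) there exists a constant C > 0 such that for every positive integer k, ∫_ω sin²(kx) dx ≥ C. -/
theorem abs_sin_nat_mul_le_aux (d : ℝ) (k : ℕ) :
    |Real.sin ((k : ℝ) * d)| ≤ k * |Real.sin d| := by
  induction k with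
  | zero => simp
  | succ n ih =>
    have e : ((n + 1 : ℕ) : ℝ) * d = n * d + d := by push_cast; ring
    rw [e, Real.sin_add]
    push_cast
    have h1 := abs_add_le (Real.sin (n * d) * Real.cos d) (Real.cos (n * d) * Real.sin d)
    rw [abs_mul, abs_mul] at h1
    have h2 := mul_le_mul_of_nonneg_left (Real.abs_cos_le_one d) (abs_nonneg (Real.sin (n * d)))
    have h3 := mul_le_mul_of_nonneg_right (Real.abs_cos_le_one (n * d)) (abs_nonneg (Real.sin d))
    linarith

theorem stmt16 (ω : Set ℝ) (hωopen : IsOpen ω) (hωsub : ω ⊆ Set.Ioo 0 Real.pi)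
    (hωne : ω.Nonempty) :
    ∃ C > (0:ℝ), ∀ k : ℕ, 0 < k →
      C ≤ ∫ x in ω, (Real.sin ((k : ℝ) * x)) ^ 2 := by
  obtain ⟨x, hx⟩ := hωne
  obtain ⟨ε, hε, hball⟩ := Metric.isOpen_iff.1 hωopen x hx
  obtain ⟨a, b, hab, hI⟩ : ∃ a b : ℝ, a < b ∧ Set.Icc a b ⊆ ω := by
    refine ⟨x, x + ε / 2, by linarith, fun y hy => hball ?_⟩
    rw [Metric.mem_ball, Real.dist_eq, abs_lt]
    constructor <;> linarith [hy.1, hy.2]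
  have ha := hωsub (hI (Set.left_mem_Icc.2 hab.le))
  have hb := hωsub (hI (Set.right_mem_Icc.2 hab.le))
  have hpos : 0 < Real.sin (b - a) :=
    Real.sin_pos_of_pos_of_lt_pi (by linarith) (by linarith [ha.1, hb.2])
  have hlt : Real.sin (b - a) < b - a := Real.sin_lt (by linarith)
  refine ⟨(b - a - Real.sin (b - a)) / 2, by linarith, fun k hk => ?_⟩
  have hk' : (0 : ℝ) < k := by exact_mod_cast hk
  have hint : MeasureTheory.IntegrableOn (fun x => (Real.sin ((k : ℝ) * x)) ^ 2) ω := by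
    have hc : Continuous (fun x => (Real.sin ((k : ℝ) * x)) ^ 2) := by fun_prop
    exact (hc.integrableOn_Icc (a := 0) (b := Real.pi)).mono_set
      (hωsub.trans Set.Ioo_subset_Icc_self)
  have hmono : ∫ x in Set.Ioc a b, (Real.sin ((k : ℝ) * x)) ^ 2
      ≤ ∫ x in ω, (Real.sin ((k : ℝ) * x)) ^ 2 :=
    MeasureTheory.setIntegral_mono_set hint (Filter.Eventually.of_forall fun x => sq_nonneg _)
      (Set.Ioc_subset_Icc_self.trans hI).eventuallyLE
  refine le_trans ?_ hmono
  rw [← intervalIntegral.integral_of_le hab.le,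
    intervalIntegral.integral_comp_mul_left (fun x => Real.sin x ^ 2) hk'.ne', integral_sin_sq,
    smul_eq_mul, inv_mul_eq_div, le_div_iff₀ hk']
  have key : Real.sin (k * b) * Real.cos (k * b) - Real.sin (k * a) * Real.cos (k * a)
      = Real.sin (k * (b - a)) * Real.cos (k * b + k * a) := by
    rw [mul_sub, Real.sin_sub, Real.cos_add]
    have e1 := Real.sin_sq_add_cos_sq (k * b)
    have e2 := Real.sin_sq_add_cos_sq (k * a)
    linear_combination (Real.sin (k * a) * Real.cos (k * a)) * e1
      - (Real.sin (k * b) * Real.cos (k * b)) * e2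
  have h1 : Real.sin (k * (b - a)) * Real.cos (k * b + k * a) ≤ k * Real.sin (b - a) := by
    refine (le_abs_self _).trans ?_
    rw [abs_mul]
    have h2 := mul_le_mul_of_nonneg_left (Real.abs_cos_le_one (k * b + k * a))
      (abs_nonneg (Real.sin (k * (b - a))))
    have h3 := abs_sin_nat_mul_le_aux (b - a) k
    rw [abs_of_pos hpos] at h3
    linarith
  linarith
end
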